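/- arXiv:1010.5341 — 3 statements merged into one kernel-verified Lean document; each statement's English description precedes it below -/
import Mathlib

section
/- Let n and r be coprime positive integers with n > r, n ≥ 10 and n even, and let ε > 0. Then there exists a constant C, depending only on n and ε, such that for every real H ≥ 1 the number of pairs (a_r, a_n) ∈ ℤ² with |a_r| ≤ H, |a_n| ≤ H such that X^n + a_rX^{n-r} + a_n is irreducible over ℚ and the Galois group of its splitting field over ℚ is isomorphic to the alternating group A_n is at most C·H^{1+ε}. -/
open Polynomial

lemma pell_gap {D u v u' v' : ℤ} (hD : 0 < D) (h : u ^ 2 - D * v ^ 2 = 1)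
    (h' : u' ^ 2 - D * v' ^ 2 = 1) (hu : 0 < u) (hv : 0 < v) (hu' : 0 < u') (hvv : v < v') :
    2 * v ≤ v' := by
  have huv : v ≤ u := by nlinarith
  have hw : 0 < u * v' - u' * v := by
    by_contra hc
    push Not at hc
    have h1 : (u * v') ^ 2 ≤ (u' * v) ^ 2 := by
      apply pow_le_pow_left₀ (mul_nonneg hu.le (hv.trans hvv).le) (by linarith)
    have h2 : (u * v') ^ 2 - (u' * v) ^ 2 = v' ^ 2 - v ^ 2 := by
      linear_combination v' ^ 2 * h - v ^ 2 * h'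
    nlinarith
  have hU : 0 < u * u' - D * v * v' := by
    by_contra hc
    push Not at hc
    have h1 : (u * u') ^ 2 ≤ (D * v * v') ^ 2 := by
      apply pow_le_pow_left₀ (by positivity) (by linarith)
    have h2 : (u * u') ^ 2 - (D * v * v') ^ 2 = 1 + D * v ^ 2 + D * v' ^ 2 := by
      linear_combination u' ^ 2 * h + (1 + D * v ^ 2) * h'
    nlinarith [mul_pos hD (pow_pos hv 2), mul_nonneg hD.le (sq_nonneg v')]
  have h3 : v' = u * (u * v' - u' * v) + v * (u * u' - D * v * v') := by
    linear_combination -v' * h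
  nlinarith

lemma pell_inj {D : ℤ} (hD : D ≠ 0) {u v u' v' : ℤ} (h : u ^ 2 - D * v ^ 2 = 1)
    (h' : u' ^ 2 - D * v' ^ 2 = 1) (hu : u.sign = u'.sign) (hv : v.sign = v'.sign)
    (hl : Nat.log 2 v.natAbs = Nat.log 2 v'.natAbs) : u = u' ∧ v = v' := by
  rcases lt_or_gt_of_ne hD with hD | hD
  · have aux : ∀ {a b : ℤ}, a ^ 2 - D * b ^ 2 = 1 → a.sign = a ∧ b.sign = b := by
      intro a b hab
      have h1 : a ^ 2 ≤ 1 := by nlinarith [sq_nonneg b]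
      have h2 : b ^ 2 ≤ 1 := by nlinarith [sq_nonneg a, sq_nonneg b]
      have h3 : -1 ≤ a := by nlinarith
      have h4 : a ≤ 1 := by nlinarith
      have h5 : -1 ≤ b := by nlinarith
      have h6 : b ≤ 1 := by nlinarith
      constructor
      · interval_cases a <;> rfl
      · interval_cases b <;> rfl
    have := aux h
    have := aux h'
    omega
  · have key : ∀ {u v u' v' : ℤ}, u ^ 2 - D * v ^ 2 = 1 → u' ^ 2 - D * v' ^ 2 = 1 →
        Nat.log 2 v.natAbs = Nat.log 2 v'.natAbs → v ≠ 0 → ¬ |v| < |v'| := by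
      intro u v u' v' h h' hl hv0 hlt
      have hu0 : u ≠ 0 := by rintro rfl; nlinarith [sq_nonneg v]
      have hu0' : u' ≠ 0 := by rintro rfl; nlinarith [sq_nonneg v']
      have := pell_gap hD (u := |u|) (v := |v|) (u' := |u'|) (v' := |v'|) (by simpa using h)
        (by simpa using h') (by positivity) (by positivity) (by positivity) hlt
      have hn : v.natAbs * 2 ≤ v'.natAbs := by
        zify
        linarith
      have := Nat.log_mono_right (b := 2) hn
      rw [Nat.log_mul_base (by norm_num) (by omega)] at this
      omega
    have hvv : v = v' := by
      by_cases hv0 : v = 0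
      · subst hv0
        simp at hv
        exact (Int.sign_eq_zero_iff_zero.1 hv.symm).symm
      · have hv0' : v' ≠ 0 := by
          rintro rfl
          simp at hv
          exact hv0 (by simpa using hv)
        have h1 := key h h' hl hv0
        have h2 := key h' h hl.symm hv0'
        have h3 : |v| = |v'| := by omega
        rw [← Int.sign_mul_abs v, ← Int.sign_mul_abs v', hv, h3]
    refine ⟨?_, hvv⟩
    have h3 : |u| = |u'| := by
      rw [← sq_eq_sq_iff_abs_eq_abs]
      subst hvv; linarith
    rw [← Int.sign_mul_abs u, ← Int.sign_mul_abs u', hu, h3]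

lemma sign_mem (a : ℤ) : a.sign ∈ ({-1, 0, 1} : Finset ℤ) := by
  rcases lt_trichotomy a 0 with h | h | h
  · simp [Int.sign_eq_neg_one_of_neg h]
  · simp [h]
  · simp [Int.sign_eq_one_of_pos h]

lemma pell_count {D : ℤ} (hD : D ≠ 0) (B : ℕ) (S : Finset (ℤ × ℤ))
    (hS : ∀ p ∈ S, p.1 ^ 2 - D * p.2 ^ 2 = 1 ∧ p.2.natAbs ≤ B) :
    S.card ≤ 9 * (Nat.log 2 B + 1) := by
  have : S.card ≤ ((({-1, 0, 1} : Finset ℤ) ×ˢ ({-1, 0, 1} : Finset ℤ)) ×ˢ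
      Finset.range (Nat.log 2 B + 1)).card := by
    apply Finset.card_le_card_of_injOn
      (fun p => ((p.1.sign, p.2.sign), Nat.log 2 p.2.natAbs))
    · intro p hp
      have h2 := Nat.log_mono_right (b := 2) (hS p hp).2
      simp only [Finset.coe_product, Set.mem_prod, Finset.mem_coe]
      exact ⟨⟨sign_mem _, sign_mem _⟩, by simp; omega⟩
    · intro p hp q hq hpq
      simp only [Prod.mk.injEq] at hpq
      obtain ⟨h1, h2⟩ := pell_inj hD (hS p hp).1 (hS q hq).1 hpq.1.1 hpq.1.2 hpq.2
      exact Prod.ext h1 h2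
  simpa [Finset.card_product] using this

lemma root_count {D : ℤ} (hD : D ≠ 0) {m : ℕ} (hm : m ≠ 0) (T : Finset ℕ)
    (hT : ∀ t ∈ T, t < m ∧ (m : ℤ) ∣ (t : ℤ) ^ 2 - D) :
    T.card ≤ (4 * D.natAbs) * m.divisors.card := by
  rcases T.eq_empty_or_nonempty with rfl | ⟨t0, ht0⟩
  · simp
  have hmaps : ∀ t ∈ T, (Int.gcd (t - t0) m) ∈ m.divisors := by
    intro t ht
    rw [Nat.mem_divisors]
    refine ⟨?_, hm⟩
    exact_mod_cast Int.gcd_dvd_right (t - t0 : ℤ) (m : ℤ)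
  refine Finset.card_le_mul_card_image_of_maps_to hmaps _ ?_
  intro d hd
  have hd' := Nat.mem_divisors.1 hd
  obtain ⟨e, he⟩ := hd'.1
  have hd0 : d ≠ 0 := by rintro rfl; simp at he; exact hm he
  have he0 : e ≠ 0 := by rintro rfl; simp at he; exact hm he
  have hmz : (m : ℤ) = d * e := by exact_mod_cast he
  -- facts for elements of the fiber
  have hfac : ∀ t ∈ T, Int.gcd (t - t0) m = d → (d : ℤ) ∣ t - t0 ∧ (e : ℤ) ∣ t + t0 := by
    intro t ht htd
    have h1 : (d : ℤ) ∣ t - t0 := by rw [← htd]; exact Int.gcd_dvd_left _ _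
    refine ⟨h1, ?_⟩
    have h2 : (m : ℤ) ∣ (t - t0) * (t + t0) := by
      rw [show ((t : ℤ) - t0) * (t + t0) = (t ^ 2 - D) - (t0 ^ 2 - D) by ring]
      exact dvd_sub (hT t ht).2 (hT t0 ht0).2
    obtain ⟨k, hk⟩ := h1
    have hcop : IsCoprime (e : ℤ) k := by
      rw [Int.isCoprime_iff_gcd_eq_one]
      have : Int.gcd (d * k) (d * e) = d := by rw [← hk, ← hmz]; exact htd
      rw [Int.gcd_mul_left] at this
      simp at this
      rw [Int.gcd_comm]
      exact Nat.eq_of_mul_eq_mul_left (Nat.pos_of_ne_zero hd0) (by rw [this, mul_one])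
    apply hcop.dvd_of_dvd_mul_left
    rw [hk, hmz, mul_assoc] at h2
    exact Int.dvd_of_mul_dvd_mul_left (by exact_mod_cast hd0) h2
  set g := Nat.gcd d e with hg
  rcases (T.filter (fun t : ℕ => Int.gcd (t - t0) m = d)).eq_empty_or_nonempty with h0 | ⟨t1, ht1⟩
  · rw [h0]; simp
  rw [Finset.mem_filter] at ht1
  have hgd : (g : ℤ) ∣ d := by exact_mod_cast Nat.gcd_dvd_left d e
  have hge : (g : ℤ) ∣ e := by exact_mod_cast Nat.gcd_dvd_right d e
  have hgD : (g : ℤ) ∣ 4 * D := by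
    have h1 := hfac t1 ht1.1 ht1.2
    have h2 : (g : ℤ) ∣ 2 * t0 := by
      rw [show (2 * t0 : ℤ) = (t1 + t0) - (t1 - t0) by ring]
      exact dvd_sub (hge.trans h1.2) (hgd.trans h1.1)
    have h3 : (g : ℤ) ∣ t0 ^ 2 - D := (hgd.trans ⟨e, hmz⟩).trans (hT t0 ht0).2
    rw [show 4 * D = (2 * t0) * (2 * t0) - 4 * (t0 ^ 2 - D) by ring]
    exact dvd_sub (h2.mul_right (2 * t0)) (h3.mul_left 4)
  have hdiff : ∀ t ∈ T, Int.gcd (t - t0) m = d → ∀ t' ∈ T, Int.gcd (t' - t0) m = d →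
      (m : ℤ) ∣ 4 * D * (t - t') := by
    intro t ht h t' ht' h'
    have h1 := hfac t ht h
    have h2 := hfac t' ht' h'
    have h3 : (d : ℤ) ∣ t - t' := by
      rw [show (t : ℤ) - t' = (t - t0) - (t' - t0) by ring]
      exact dvd_sub h1.1 h2.1
    have h4 : (e : ℤ) ∣ t - t' := by
      rw [show (t : ℤ) - t' = (t + t0) - (t' + t0) by ring]
      exact dvd_sub h1.2 h2.2
    have h5 : (m : ℤ) ∣ g * (t - t') := by
      rw [hmz]
      have hb := Nat.gcd_eq_gcd_ab d e
      have hb' : (g : ℤ) * (t - t') = d * (t - t') * Nat.gcdA d e + e * (t - t') * Nat.gcdB d e := by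
        rw [hg, hb]; ring
      rw [hb']
      apply dvd_add
      · exact (mul_dvd_mul_left _ h4).mul_right _
      · rw [mul_comm (d : ℤ)]
        exact (mul_dvd_mul_left _ h3).mul_right _
    exact h5.trans (mul_dvd_mul_right hgD _)
  rw [← Finset.card_range (4 * D.natAbs)]
  apply Finset.card_le_card_of_injOn (fun t => (4 * D.natAbs * t) / m)
  · intro t ht
    simp only [Finset.coe_filter, Set.mem_ofPred_eq] at ht
    have := (hT t ht.1).1
    simp only [Finset.coe_range, Set.mem_Iio]
    rw [Nat.div_lt_iff_lt_mul (Nat.pos_of_ne_zero hm)]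
    have : 0 < 4 * D.natAbs := by omega
    gcongr
  · intro t ht t' ht' htt
    simp only [Finset.coe_filter, Set.mem_ofPred_eq] at ht ht'
    have h1 := hdiff t ht.1 ht.2 t' ht'.1 ht'.2
    have h2 : (m : ℤ) ∣ ((4 * D.natAbs * t : ℕ) : ℤ) - ((4 * D.natAbs * t' : ℕ) : ℤ) := by
      push_cast
      rw [← mul_sub]
      rcases abs_choice D with hc | hc
      · rw [hc]; exact h1
      · rw [hc]
        rw [show 4 * -D * ((t : ℤ) - t') = -(4 * D * (t - t')) by ring]
        exact (dvd_neg).2 h1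
    have h3 := (Nat.modEq_iff_dvd.2 h2)
    have h4 : 4 * D.natAbs * t = 4 * D.natAbs * t' := by
      rw [← Nat.div_add_mod (4 * D.natAbs * t) m, ← Nat.div_add_mod (4 * D.natAbs * t') m]
      simp only at htt
      rw [htt, h3]
    exact Nat.eq_of_mul_eq_mul_left (by omega) h4

lemma prim_count {D : ℤ} (hD : D ≠ 0) {N : ℤ} (hN : N ≠ 0) (B : ℕ) (S : Finset (ℤ × ℤ))
    (hS : ∀ p ∈ S, p.1 ^ 2 - D * p.2 ^ 2 = N ∧ IsCoprime p.1 p.2 ∧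
      p.1.natAbs ≤ B ∧ p.2.natAbs ≤ B) :
    S.card ≤ (9 * (Nat.log 2 (2 * B ^ 2) + 1)) * ((4 * D.natAbs) * N.natAbs.divisors.card) := by
  classical
  set m := N.natAbs with hm
  have hm0 : m ≠ 0 := by simpa [hm] using hN
  have : NeZero m := ⟨hm0⟩
  have hmN : (m : ℤ) ∣ N := by rw [hm]; exact Int.natAbs_dvd.2 dvd_rfl
  have hNm : N ∣ (m : ℤ) := by rw [hm]; exact Int.dvd_natAbs.2 dvd_rfl
  have hcop : ∀ p ∈ S, IsCoprime N p.2 := by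
    intro p hp
    obtain ⟨h1, h2, -⟩ := hS p hp
    have h3 : IsCoprime (p.1 ^ 2) p.2 := h2.pow_left
    have : IsCoprime (p.1 ^ 2 + p.2 * (-D * p.2)) p.2 := h3.add_mul_left_left _
    rwa [show p.1 ^ 2 + p.2 * (-D * p.2) = N by rw [← h1]; ring] at this
  have hunit : ∀ p ∈ S, ((p.2 : ZMod m)) * (p.2 : ZMod m)⁻¹ = 1 := by
    intro p hp
    apply ZMod.mul_inv_of_unit
    obtain ⟨a, b, hab⟩ := hcop p hp
    have hN0 : (N : ZMod m) = 0 := (ZMod.intCast_zmod_eq_zero_iff_dvd _ _).2 hmN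
    have : ((a * N + b * p.2 : ℤ) : ZMod m) = 1 := by rw [hab]; simp
    push_cast at this
    rw [hN0, mul_zero, zero_add] at this
    exact IsUnit.of_mul_eq_one_right _ this
  let t : ℤ × ℤ → ℕ := fun p => ((p.1 : ZMod m) * (p.2 : ZMod m)⁻¹).val
  have hroot : (S.image t).card ≤ (4 * D.natAbs) * m.divisors.card := by
    apply root_count hD hm0
    intro k hk
    obtain ⟨p, hp, rfl⟩ := Finset.mem_image.1 hk
    refine ⟨ZMod.val_lt _, ?_⟩
    rw [← ZMod.intCast_zmod_eq_zero_iff_dvd]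
    have h1 : ((p.1 ^ 2 - D * p.2 ^ 2 : ℤ) : ZMod m) = 0 := by
      rw [(hS p hp).1]
      exact (ZMod.intCast_zmod_eq_zero_iff_dvd _ _).2 hmN
    push_cast at h1 ⊢
    simp only [t, ZMod.natCast_val, ZMod.cast_id', id]
    have h2 := hunit p hp
    linear_combination ((p.2 : ZMod m)⁻¹) ^ 2 * h1 + D * ((p.2 : ZMod m) * (p.2 : ZMod m)⁻¹ + 1) * h2
  refine le_trans (Finset.card_le_mul_card_image (f := t) S
    (9 * (Nat.log 2 (2 * B ^ 2) + 1)) ?_) (Nat.mul_le_mul_left _ hroot)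
  intro k hk
  obtain ⟨q, hq, rfl⟩ := Finset.mem_image.1 hk
  set F := S.filter (fun p => t p = t q) with hF
  have hdv : ∀ p ∈ F, N ∣ p.2 * q.1 - p.1 * q.2 ∧ N ∣ p.1 * q.1 - D * p.2 * q.2 := by
    intro p hp
    rw [hF, Finset.mem_filter] at hp
    have h1 := ZMod.val_injective m hp.2
    have h2 := hunit p hp.1
    have h3 := hunit q hq
    have h4 : N ∣ p.2 * q.1 - p.1 * q.2 := by
      refine hNm.trans ?_
      rw [← ZMod.intCast_zmod_eq_zero_iff_dvd]
      push_cast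
      linear_combination (-(p.2 : ZMod m) * q.2) * h1 + (q.2 : ZMod m) * p.1 * h2
        - (p.2 : ZMod m) * q.1 * h3
    refine ⟨h4, ?_⟩
    apply (hcop q hq).dvd_of_dvd_mul_left
    have e1 := (hS q hq).1
    rw [show q.2 * (p.1 * q.1 - D * p.2 * q.2) = p.2 * N - q.1 * (p.2 * q.1 - p.1 * q.2) by
      rw [← e1]; ring]
    exact dvd_sub (dvd_mul_left _ _) (h4.mul_left _)
  let w : ℤ × ℤ → ℤ × ℤ := fun p =>
    ((p.1 * q.1 - D * p.2 * q.2) / N, (p.2 * q.1 - p.1 * q.2) / N)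
  have hw : ∀ p ∈ F, N * (w p).1 = p.1 * q.1 - D * p.2 * q.2 ∧
      N * (w p).2 = p.2 * q.1 - p.1 * q.2 := fun p hp =>
    ⟨Int.mul_ediv_cancel' (hdv p hp).2, Int.mul_ediv_cancel' (hdv p hp).1⟩
  have hinj : Set.InjOn w F := by
    intro p hp p' hp' hpp
    have h1 := hw p hp
    have h2 := hw p' hp'
    rw [hpp] at h1
    have e1 := (hS q hq).1
    have h3 : p.1 * q.1 - D * p.2 * q.2 = p'.1 * q.1 - D * p'.2 * q.2 := by
      rw [← h1.1, ← h2.1]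
    have h4 : p.2 * q.1 - p.1 * q.2 = p'.2 * q.1 - p'.1 * q.2 := by
      rw [← h1.2, ← h2.2]
    ext
    · apply mul_left_cancel₀ hN
      rw [← e1]
      linear_combination q.1 * h3 + D * q.2 * h4
    · apply mul_left_cancel₀ hN
      rw [← e1]
      linear_combination q.2 * h3 + q.1 * h4
  rw [← Finset.card_image_of_injOn hinj]
  apply pell_count hD
  intro x hx
  obtain ⟨p, hp, rfl⟩ := Finset.mem_image.1 hx
  have h1 := hw p hp
  have hpS : p ∈ S := (Finset.mem_filter.1 hp).1
  have e1 := hS q hq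
  have e2 := hS p hpS
  constructor
  · apply mul_left_cancel₀ (pow_ne_zero 2 hN)
    have : N ^ 2 * ((w p).1 ^ 2 - D * (w p).2 ^ 2) =
      (N * (w p).1) ^ 2 - D * (N * (w p).2) ^ 2 := by ring
    rw [this, h1.1, h1.2]
    calc _ = (p.1 ^ 2 - D * p.2 ^ 2) * (q.1 ^ 2 - D * q.2 ^ 2) := by ring
      _ = _ := by rw [e1.1, e2.1]; ring
  · calc (w p).2.natAbs ≤ N.natAbs * (w p).2.natAbs :=
          Nat.le_mul_of_pos_left _ (Nat.pos_of_ne_zero hm0)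
      _ = (p.2 * q.1 - p.1 * q.2).natAbs := by rw [← Int.natAbs_mul, h1.2]
      _ ≤ (p.2 * q.1).natAbs + (p.1 * q.2).natAbs := Int.natAbs_sub_le _ _
      _ = p.2.natAbs * q.1.natAbs + p.1.natAbs * q.2.natAbs := by
          rw [Int.natAbs_mul, Int.natAbs_mul]
      _ ≤ B * B + B * B := by
          gcongr
          · exact e2.2.2.2
          · exact e1.2.2.1
          · exact e2.2.2.1
          · exact e1.2.2.2
      _ = 2 * B ^ 2 := by ring

lemma norm_count {D : ℤ} (hD : D ≠ 0) {N : ℤ} (hN : N ≠ 0) (B : ℕ) (S : Finset (ℤ × ℤ))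
    (hS : ∀ p ∈ S, p.1 ^ 2 - D * p.2 ^ 2 = N ∧ p.1.natAbs ≤ B ∧ p.2.natAbs ≤ B) :
    S.card ≤ (9 * (Nat.log 2 (2 * B ^ 2) + 1)) * ((4 * D.natAbs) * N.natAbs.divisors.card)
      * N.natAbs.divisors.card := by
  classical
  have hm0 : N.natAbs ≠ 0 := by simpa using hN
  have hg2 : ∀ p ∈ S, ((Int.gcd p.1 p.2 : ℕ) : ℤ) ^ 2 ∣ N := by
    intro p hp
    rw [← (hS p hp).1]
    exact dvd_sub (pow_dvd_pow_of_dvd (Int.gcd_dvd_left _ _) 2)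
      ((pow_dvd_pow_of_dvd (Int.gcd_dvd_right _ _) 2).mul_left _)
  refine Finset.card_le_mul_card_image_of_maps_to (f := fun p => Int.gcd p.1 p.2) ?_ _ ?_
  · intro p hp
    rw [Nat.mem_divisors]
    refine ⟨?_, hm0⟩
    rw [← Int.natCast_dvd]
    exact (Dvd.intro_left _ (by rw [pow_two])).trans (hg2 p hp)
  · intro g hg
    rcases (S.filter (fun p => Int.gcd p.1 p.2 = g)).eq_empty_or_nonempty with h0 | ⟨q, hq⟩
    · rw [h0]; simp
    have hq' := Finset.mem_filter.1 hq
    have hgN := hg2 q hq'.1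
    rw [hq'.2] at hgN
    obtain ⟨M, hM⟩ := hgN
    have hg0 : (g : ℤ) ≠ 0 := by
      rintro h
      rw [h] at hM
      simp at hM
      exact hN hM
    have hgn : 0 < g := by
      rcases Nat.eq_zero_or_pos g with h | h
      · exact absurd (by exact_mod_cast h) hg0
      · exact h
    have hM0 : M ≠ 0 := by rintro rfl; simp at hM; exact hN hM
    have hfac : ∀ p ∈ S.filter (fun p => Int.gcd p.1 p.2 = g),
        (g : ℤ) * (p.1 / g) = p.1 ∧ (g : ℤ) * (p.2 / g) = p.2 := by
      intro p hp
      have hp' := Finset.mem_filter.1 hp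
      constructor
      · apply Int.mul_ediv_cancel'
        rw [← hp'.2]; exact Int.gcd_dvd_left _ _
      · apply Int.mul_ediv_cancel'
        rw [← hp'.2]; exact Int.gcd_dvd_right _ _
    have hinj : Set.InjOn (fun p : ℤ × ℤ => (p.1 / (g : ℤ), p.2 / (g : ℤ)))
        (S.filter (fun p => Int.gcd p.1 p.2 = g)) := by
      intro p hp p' hp' hpp
      simp only [Prod.mk.injEq] at hpp
      have h1 := hfac p hp
      have h2 := hfac p' hp'
      ext
      · rw [← h1.1, ← h2.1, hpp.1]
      · rw [← h1.2, ← h2.2, hpp.2]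
    rw [← Finset.card_image_of_injOn hinj]
    refine le_trans (prim_count hD hM0 B _ ?_) ?_
    · intro x hx
      obtain ⟨p, hp, rfl⟩ := Finset.mem_image.1 hx
      have h1 := hfac p hp
      have hp' := Finset.mem_filter.1 hp
      have h2 := hS p hp'.1
      refine ⟨?_, ?_, ?_, ?_⟩
      · apply mul_left_cancel₀ (pow_ne_zero 2 hg0)
        rw [← hM, ← h2.1]
        conv_rhs => rw [← h1.1, ← h1.2]
        ring
      · rw [Int.isCoprime_iff_gcd_eq_one]
        have h3 := Int.gcd_div_gcd_div_gcd (i := p.1) (j := p.2) (by rw [hp'.2]; exact hgn)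
        rw [hp'.2] at h3
        exact h3
      · refine le_trans ?_ h2.2.1
        conv_rhs => rw [← h1.1]
        rw [Int.natAbs_mul]
        exact Nat.le_mul_of_pos_left _ hgn
      · refine le_trans ?_ h2.2.2
        conv_rhs => rw [← h1.2]
        rw [Int.natAbs_mul]
        exact Nat.le_mul_of_pos_left _ hgn
    · gcongr
      · rw [hM, Int.natAbs_mul]
        exact dvd_mul_left _ _

lemma prod_zeta {E : Type*} [Field E] {n r : ℕ} (hodd : Odd r) (hco : Nat.Coprime n r)
    {ζ : E} (hζ : IsPrimitiveRoot ζ r) (x y : E) :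
    ∏ ξ ∈ nthRootsFinset r (1 : E), (x + ξ ^ n * y) = x ^ r + y ^ r := by
  rw [IsPrimitiveRoot.pow_add_pow_eq_prod_add_mul x y hodd hζ]
  have hmem : ∀ ξ : E, ξ ∈ nthRootsFinset r (1 : E) ↔ ξ ^ r = 1 := fun ξ =>
    mem_nthRootsFinset hodd.pos 1
  have hmaps : Set.MapsTo (fun ξ : E => ξ ^ n) (nthRootsFinset r (1 : E))
      (nthRootsFinset r (1 : E)) := by
    intro ξ hξ
    simp only [Finset.mem_coe, hmem] at hξ ⊢
    rw [← pow_mul, mul_comm, pow_mul, hξ, one_pow]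
  have hinj : Set.InjOn (fun ξ : E => ξ ^ n) (nthRootsFinset r (1 : E)) := by
    intro ξ hξ η hη h
    simp only [Finset.mem_coe, hmem] at hξ hη h
    have hη0 : η ≠ 0 := by
      rintro rfl
      rw [zero_pow hodd.pos.ne'] at hη
      exact zero_ne_one hη
    have h1 : (ξ / η) ^ n = 1 := by rw [div_pow, h, div_self (pow_ne_zero _ hη0)]
    have h2 : (ξ / η) ^ r = 1 := by rw [div_pow, hξ, hη, div_one]
    have h3 : orderOf (ξ / η) ∣ 1 := by
      rw [← Nat.coprime_iff_gcd_eq_one.1 hco]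
      exact Nat.dvd_gcd (orderOf_dvd_of_pow_eq_one h1) (orderOf_dvd_of_pow_eq_one h2)
    have h4 := orderOf_eq_one_iff.1 (Nat.dvd_one.1 h3)
    exact (div_eq_one_iff_eq hη0).1 h4
  exact Finset.prod_nbij (fun ξ : E => ξ ^ n) hmaps hinj
    (Finset.surjOn_of_injOn_of_card_le _ hmaps hinj le_rfl) (fun _ _ => rfl)

lemma disc_formula {E : Type*} [Field E] [IsAlgClosed E] [CharZero E] {n r : ℕ} (hr : 0 < r)
    (hrn : r < n) (hco : Nat.Coprime n r) (hne : Even n) (a b : E) (α : Fin n → E)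
    (hα : X ^ n + C a * X ^ (n - r) + C b = ∏ i, (X - C (α i))) :
    ∏ i, ∏ j ∈ ({i}ᶜ : Finset (Fin n)), (α i - α j) =
      b ^ (n - r - 1) * ((n : E) ^ n * b ^ r - (r : E) ^ r * ((n - r : ℕ) : E) ^ (n - r) * a ^ n) := by
  classical
  have hn0 : (n : E) ≠ 0 := by exact_mod_cast (by omega : n ≠ 0)
  have hodd : Odd r := by
    rcases Nat.even_or_odd r with h | h
    · exfalso
      have := Nat.dvd_gcd hne.two_dvd h.two_dvd
      rw [Nat.coprime_iff_gcd_eq_one.1 hco] at this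
      omega
    · exact h
  have hoddnr : Odd (n - r) := Nat.Even.sub_odd hrn.le hne hodd
  have heval : ∀ x : E, x ^ n + a * x ^ (n - r) + b = ∏ i, (x - α i) := by
    intro x
    have := congrArg (eval x) hα
    simpa [eval_prod] using this
  have hder : ∀ i, ∏ j ∈ ({i}ᶜ : Finset (Fin n)), (α i - α j) =
      α i ^ (n - r - 1) * (n * α i ^ r + ((n - r : ℕ) : E) * a) := by
    intro i
    have h1 := Lagrange.eval_nodal_derivative_eval_node_eq (s := Finset.univ) (v := α)
      (Finset.mem_univ i)
    rw [Lagrange.nodal, ← hα, Lagrange.eval_nodal] at h1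
    rw [← Finset.sdiff_singleton_eq_erase, ← Finset.compl_eq_univ_sdiff] at h1
    rw [← h1]
    simp only [derivative_add, derivative_mul, derivative_C, derivative_X_pow, eval_add, eval_mul,
      eval_C, eval_pow, eval_X, zero_mul, zero_add, add_zero, eval_zero]
    rw [show n - 1 = (n - r - 1) + r by omega, pow_add]
    ring
  have hprodα : ∏ i, α i = b := by
    have := heval 0
    simp only [zero_sub] at this
    rw [zero_pow (by omega), zero_pow (by omega), Finset.prod_neg] at this
    simpa [hne.neg_one_pow] using this.symm
  simp_rw [hder]
  rw [Finset.prod_mul_distrib, Finset.prod_pow, hprodα]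
  congr 1
  obtain ⟨c, hc⟩ := IsAlgClosed.exists_pow_nat_eq (-(((n - r : ℕ) : E) * a / n)) hr
  have : NeZero (r : E) := ⟨by exact_mod_cast hr.ne'⟩
  obtain ⟨ζ, hζ⟩ := HasEnoughRootsOfUnity.exists_primitiveRoot E r
  have h1 : ∀ i, (n : E) * α i ^ r + ((n - r : ℕ) : E) * a =
      n * ∏ ξ ∈ nthRootsFinset r (1 : E), (α i - ξ * c) := by
    intro i
    rw [← IsPrimitiveRoot.pow_sub_pow_eq_prod_sub_mul (α i) c hr hζ, hc]
    field_simp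
    ring
  simp_rw [h1]
  rw [Finset.prod_mul_distrib, Finset.prod_comm]
  have h2 : ∀ ξ ∈ nthRootsFinset r (1 : E), ∏ i, (α i - ξ * c) =
      b + ξ ^ n * (c ^ (n - r) * (c ^ r + a)) := by
    intro ξ hξ
    rw [mem_nthRootsFinset hr] at hξ
    have h3 : ∏ i, (α i - ξ * c) = ∏ i, (ξ * c - α i) := by
      have : ∀ i, α i - ξ * c = -(ξ * c - α i) := fun i => by ring
      simp_rw [this]
      rw [Finset.prod_neg]
      simp [hne.neg_one_pow]
    rw [h3, ← heval]
    have h4 : ξ ^ n = ξ ^ (n - r) := by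
      conv_lhs => rw [show n = (n - r) + r by omega, pow_add, hξ, mul_one]
    have h5 : c ^ n = c ^ (n - r) * c ^ r := by rw [← pow_add]; congr 1; omega
    rw [mul_pow, mul_pow, ← h4, h5]
    ring
  rw [Finset.prod_congr rfl h2, prod_zeta hodd hco hζ]
  have h6 : c ^ r + a = r * a / n := by
    rw [hc, Nat.cast_sub hrn.le]
    field_simp
    ring
  rw [h6, mul_pow, ← pow_mul, mul_comm (n - r) r, pow_mul, hc, hoddnr.neg_pow]
  simp only [Finset.prod_const, Finset.card_univ, Fintype.card_fin]
  have h7 : (n : E) ^ n = n ^ (n - r) * n ^ r := by rw [← pow_add]; congr 1; omega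
  have h8 : a ^ n = a ^ (n - r) * a ^ r := by rw [← pow_add]; congr 1; omega
  rw [h7, h8, div_pow, div_pow, mul_pow, mul_pow]
  field_simp
  ring

lemma gal_sq (E : Type*) [Field E] [Algebra ℚ E] [IsAlgClosed E] [IsGalois ℚ E] {n : ℕ} (hn : 2 ≤ n) (p : ℚ[X]) (hp : Irreducible p) (hm : p.Monic)
    (hdeg : p.natDegree = n) (hG : Nonempty (p.Gal ≃* alternatingGroup (Fin n))) :
    ∃ α : Fin n → E,
      p.map (algebraMap ℚ E) = ∏ i, (X - C (α i)) ∧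
      ∃ q : ℚ, algebraMap ℚ E q = ∏ i, ∏ j ∈ Finset.Ioi i, (α j - α i) := by
  classical
  have hsplit : (p.map (algebraMap ℚ E)).Splits := IsAlgClosed.splits _
  have : Fact ((p.map (algebraMap ℚ E)).Splits) := ⟨hsplit⟩
  have hcard : Fintype.card (p.rootSet E) = n := by
    rw [card_rootSet_eq_natDegree hp.separable hsplit, hdeg]
  let e : Fin n ≃ p.rootSet E := (Fintype.equivFinOfCardEq hcard).symm
  have hNat : Nat.card (p.rootSet E) = n := by rw [Nat.card_eq_fintype_card, hcard]
  have : Nontrivial (p.rootSet E) := by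
    rw [← Fintype.one_lt_card_iff_nontrivial, hcard]; omega
  have : Nontrivial (Fin n) := Fin.nontrivial_iff_two_le.2 hn
  have hrange : (Gal.galActionHom p E).range = alternatingGroup (p.rootSet E) := by
    apply Equiv.Perm.eq_alternatingGroup_of_index_eq_two
    have h1 : Nat.card (Gal.galActionHom p E).range = Nat.card (alternatingGroup (Fin n)) := by
      rw [← Nat.card_congr hG.some.toEquiv]
      exact (Nat.card_congr
        ((MonoidHom.ofInjective (Gal.galActionHom_injective p E)).toEquiv)).symm
    have h2 := (Gal.galActionHom p E).range.index_mul_card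
    have h3 := two_mul_nat_card_alternatingGroup (α := Fin n)
    rw [h1, Nat.card_perm, hNat] at h2
    rw [Nat.card_perm, Nat.card_fin, ← h2] at h3
    exact (Nat.eq_of_mul_eq_mul_right Nat.card_pos h3).symm
  refine ⟨fun i => (e i : E), ?_, ?_⟩
  · have h1 := hsplit.eq_prod_roots_of_monic (hm.map _)
    have hnodup : (p.map (algebraMap ℚ E)).roots.Nodup :=
      nodup_roots (hp.separable.map)
    have h2 : ∏ x ∈ (p.map (algebraMap ℚ E)).roots.toFinset, (X - C x) =
        ∏ x : p.rootSet E, (X - C (x : E)) := by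
      apply Finset.prod_subtype
      intro x
      rw [rootSet_def, aroots, Finset.mem_coe]
    rw [Equiv.prod_comp e (fun x => X - C (x : E)), ← h2, Finset.prod, Multiset.toFinset_val,
      hnodup.dedup]
    exact h1
  · have hmem := InfiniteGalois.mem_range_algebraMap_iff_fixed (k := ℚ) (K := E)
      (∏ i, ∏ j ∈ Finset.Ioi i, ((e j : E) - (e i : E)))
    refine hmem.2 ?_
    intro τ
    rw [← Matrix.det_vandermonde (fun i => (e i : E))]
    let σ : Equiv.Perm (p.rootSet E) := Gal.galActionHom p E (Gal.restrict p E τ)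
    have hσ : Equiv.Perm.sign σ = 1 := by
      rw [← Equiv.Perm.mem_alternatingGroup, ← hrange]
      exact ⟨_, rfl⟩
    let π : Equiv.Perm (Fin n) := e.symm.permCongr σ
    have hπ : Equiv.Perm.sign π = 1 := by
      simp only [π, Equiv.Perm.sign_permCongr, hσ]
    have hact : ∀ i, τ (e i : E) = (e (π i) : E) := by
      intro i
      rw [← Gal.galActionHom_restrict p E τ (e i)]
      simp [π, σ, Equiv.permCongr_apply]
    have := Matrix.det_permute π (Matrix.vandermonde (fun i => (e i : E)))
    rw [hπ] at this
    simp only [Units.val_one, Int.cast_one, one_mul] at this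
    calc τ (Matrix.vandermonde (fun i => (e i : E))).det
        = ((Matrix.vandermonde (fun i => (e i : E))).submatrix π id).det := by
          rw [AlgEquiv.map_det]
          congr 1
          ext i j
          simp [Matrix.vandermonde_apply, hact]
      _ = _ := this

lemma isGalois_closure (F : Type*) [Field F] [CharZero F] : IsGalois F (AlgebraicClosure F) := by
  have : Algebra.IsSeparable F (AlgebraicClosure F) :=
    Algebra.IsAlgebraic.isSeparable_of_perfectField
  exact ⟨⟩

lemma isGalois_closure_rat : IsGalois ℚ (AlgebraicClosure ℚ) := by
  convert isGalois_closure ℚ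
  exact Subsingleton.elim _ _

lemma trinomial_sq {n r : ℕ} (hr : 0 < r) (hrn : r < n) (hco : Nat.Coprime n r)
    (hn : 2 ≤ n) (hne : Even n) (a b : ℤ)
    (hp : Irreducible (X ^ n + C ((a : ℚ)) * X ^ (n - r) + C ((b : ℚ)) : ℚ[X]))
    (hG : Nonempty ((X ^ n + C ((a : ℚ)) * X ^ (n - r) + C ((b : ℚ)) : ℚ[X]).Gal ≃*
      alternatingGroup (Fin n))) :
    b ≠ 0 ∧ ∃ s : ℤ, (s = 1 ∨ s = -1) ∧ ∃ y : ℤ,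
      y ^ 2 = s * ((n : ℤ) ^ n * b ^ r - (r : ℤ) ^ r * ((n - r : ℕ) : ℤ) ^ (n - r) * a ^ n) := by
  classical
  set p : ℚ[X] := X ^ n + C ((a : ℚ)) * X ^ (n - r) + C ((b : ℚ)) with hpdef
  have hdegs : (C ((a : ℚ)) * X ^ (n - r) + C ((b : ℚ)) : ℚ[X]).degree < n := by
    refine (degree_add_le _ _).trans_lt (max_lt ?_ ?_)
    · refine (degree_C_mul_X_pow_le _ _).trans_lt ?_
      exact_mod_cast (by omega : n - r < n)
    · refine degree_C_le.trans_lt ?_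
      exact_mod_cast (by omega : 0 < n)
  have hpeq : p = X ^ n + (C ((a : ℚ)) * X ^ (n - r) + C ((b : ℚ))) := by rw [hpdef, add_assoc]
  have hm : p.Monic := by rw [hpeq]; exact monic_X_pow_add hdegs
  have hdeg : p.natDegree = n := by
    rw [hpeq, natDegree_add_eq_left_of_degree_lt (by simpa using hdegs), natDegree_X_pow]
  have hb : b ≠ 0 := by
    rintro rfl
    have h1 : p.IsRoot 0 := by
      simp [hpdef, IsRoot, show n ≠ 0 by omega, show n - r ≠ 0 by omega]
    have h2 := degree_eq_one_of_irreducible_of_root hp h1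
    have h3 : p.natDegree = 1 := natDegree_eq_of_degree_eq_some h2
    omega
  refine ⟨hb, ?_⟩
  have : IsGalois ℚ (AlgebraicClosure ℚ) := isGalois_closure_rat
  obtain ⟨α, hα, q, hq⟩ := gal_sq (AlgebraicClosure ℚ) hn p hp hm hdeg hG
  have hodd : Odd r := by
    rcases Nat.even_or_odd r with h | h
    · exfalso
      have := Nat.dvd_gcd hne.two_dvd h.two_dvd
      rw [Nat.coprime_iff_gcd_eq_one.1 hco] at this
      omega
    · exact h
  have hoddnr : Odd (n - r) := Nat.Even.sub_odd hrn.le hne hodd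
  obtain ⟨k, hk⟩ := hoddnr
  have hdisc := disc_formula hr hrn hco hne (a : AlgebraicClosure ℚ) (b : AlgebraicClosure ℚ) α
    (by rw [← hα, hpdef]; simp)
  have hswap : ∏ i, ∏ j ∈ ({i}ᶜ : Finset (Fin n)), (α i - α j) =
      ∏ i, ∏ j ∈ Finset.Ioi i, ((α i - α j) * (α j - α i)) := by
    rw [Finset.prod_prod_Ioi_mul_eq_prod_prod_off_diag (fun j i => α i - α j)]
  have hsgn : ∃ s : ℤ, (s = 1 ∨ s = -1) ∧
      ∏ i, ∏ j ∈ ({i}ᶜ : Finset (Fin n)), (α i - α j) =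
      s * (∏ i, ∏ j ∈ Finset.Ioi i, (α j - α i)) ^ 2 := by
    refine ⟨∏ i : Fin n, ∏ j ∈ Finset.Ioi i, (-1), ?_, ?_⟩
    · simp only [Finset.prod_const, Finset.prod_pow_eq_pow_sum]
      exact neg_one_pow_eq_or _ _
    · rw [hswap]
      push_cast
      rw [← Finset.prod_pow, ← Finset.prod_mul_distrib]
      refine Finset.prod_congr rfl fun i _ => ?_
      rw [← Finset.prod_pow, ← Finset.prod_mul_distrib]
      refine Finset.prod_congr rfl fun j _ => ?_
      ring
  obtain ⟨s, hs, hsq⟩ := hsgn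
  refine ⟨s, hs, ?_⟩
  set T : ℤ := (n : ℤ) ^ n * b ^ r - (r : ℤ) ^ r * ((n - r : ℕ) : ℤ) ^ (n - r) * a ^ n with hT
  have hqT : (s : ℚ) * q ^ 2 = (b : ℚ) ^ (2 * k) * T := by
    apply (algebraMap ℚ (AlgebraicClosure ℚ)).injective
    rw [hsq, ← hq] at hdisc
    rw [show n - r - 1 = 2 * k by omega] at hdisc
    rw [map_mul, map_mul, map_pow, map_pow, map_intCast, map_intCast, map_intCast, hdisc, hT]
    push_cast
    rfl
  have hs2 : (s : ℚ) ^ 2 = 1 := by rcases hs with rfl | rfl <;> norm_num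
  have hbq : (b : ℚ) ≠ 0 := by exact_mod_cast hb
  have hq2 : (q / b ^ k) ^ 2 = ((s * T : ℤ) : ℚ) := by
    rw [div_pow, ← pow_mul, mul_comm k 2]
    field_simp
    push_cast
    linear_combination s * hqT - q ^ 2 * hs2
  have hsqr : IsSquare ((s * T : ℤ) : ℚ) := ⟨q / b ^ k, by rw [← hq2, pow_two]⟩
  rw [Rat.isSquare_intCast_iff] at hsqr
  obtain ⟨y, hy⟩ := hsqr
  exact ⟨y, by rw [hy, pow_two]⟩

lemma two_pow_bound (δ : ℝ) (hδ : 0 < δ) : ∃ K : ℝ, 1 ≤ K ∧ ∀ k : ℕ,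
    (k + 1 : ℝ) ≤ K * ((2 : ℝ) ^ k) ^ δ := by
  have hl : 0 < Real.log 2 := Real.log_pos (by norm_num)
  refine ⟨1 + 1 / (δ * Real.log 2), le_add_of_nonneg_right (by positivity), fun k => ?_⟩
  have h1 : ((2 : ℝ) ^ k) ^ δ = Real.exp (k * (δ * Real.log 2)) := by
    rw [← Real.rpow_natCast, ← Real.rpow_mul (by norm_num), Real.rpow_def_of_pos (by norm_num)]
    congr 1; ring
  have h2 := Real.add_one_le_exp (k * (δ * Real.log 2))
  rw [h1]
  calc (k + 1 : ℝ) ≤ (1 + 1 / (δ * Real.log 2)) * (k * (δ * Real.log 2) + 1) := by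
        have : (1 + 1 / (δ * Real.log 2)) * (k * (δ * Real.log 2) + 1) =
          k * (δ * Real.log 2) + 1 + k + 1 / (δ * Real.log 2) := by
            field_simp; ring
        rw [this]
        have h3 : 0 ≤ k * (δ * Real.log 2) := by positivity
        have h4 : 0 ≤ 1 / (δ * Real.log 2) := by positivity
        linarith
    _ ≤ _ := by gcongr

lemma log_bound (δ : ℝ) (hδ : 0 < δ) : ∃ K : ℝ, 0 ≤ K ∧ ∀ x : ℕ, x ≠ 0 →
    ((Nat.log 2 x + 1 : ℕ) : ℝ) ≤ K * (x : ℝ) ^ δ := by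
  obtain ⟨K, hK, h⟩ := two_pow_bound δ hδ
  refine ⟨K, by linarith, fun x hx => ?_⟩
  push_cast
  refine (h _).trans ?_
  have : ((2 : ℝ) ^ Nat.log 2 x) ≤ x := by exact_mod_cast Nat.pow_log_le_self 2 hx
  gcongr

lemma divisor_bound (δ : ℝ) (hδ : 0 < δ) : ∃ K : ℝ, 0 ≤ K ∧ ∀ x : ℕ, x ≠ 0 →
    (x.divisors.card : ℝ) ≤ K * (x : ℝ) ^ δ := by
  obtain ⟨K, hK, h⟩ := two_pow_bound δ hδ
  obtain ⟨P, hP⟩ := exists_nat_ge ((2 : ℝ) ^ (1 / δ))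
  refine ⟨K ^ P, by positivity, fun x hx => ?_⟩
  have hterm : ∀ p ∈ x.primeFactors, ((x.factorization p + 1 : ℕ) : ℝ) ≤
      (if p < P then K else 1) * ((p : ℝ) ^ x.factorization p) ^ δ := by
    intro p hp
    have hp2 : 2 ≤ p := (Nat.prime_of_mem_primeFactors hp).two_le
    push_cast
    split_ifs with hlt
    · refine (h _).trans ?_
      have : (2 : ℝ) ≤ p := by exact_mod_cast hp2
      gcongr
    · have h1 : (2 : ℝ) ^ (1 / δ) ≤ p := hP.trans (by exact_mod_cast not_lt.1 hlt)
      have h2 : (2 : ℝ) ≤ (p : ℝ) ^ δ := by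
        calc (2 : ℝ) = ((2 : ℝ) ^ (1 / δ)) ^ δ := by
              rw [← Real.rpow_mul (by norm_num), one_div_mul_cancel hδ.ne', Real.rpow_one]
          _ ≤ _ := by gcongr
      have h3 : ((p : ℝ) ^ x.factorization p) ^ δ = ((p : ℝ) ^ δ) ^ x.factorization p := by
        rw [← Real.rpow_natCast, ← Real.rpow_natCast, ← Real.rpow_mul (by positivity),
          ← Real.rpow_mul (by positivity), mul_comm]
      rw [one_mul, h3]
      calc (x.factorization p + 1 : ℝ) ≤ (2 : ℝ) ^ x.factorization p := by
            exact_mod_cast Nat.lt_two_pow_self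
        _ ≤ _ := by gcongr
  rw [Nat.card_divisors hx]
  push_cast at hterm ⊢
  refine (Finset.prod_le_prod (fun _ _ => by positivity) hterm).trans ?_
  rw [Finset.prod_mul_distrib]
  have h4 : ∏ p ∈ x.primeFactors, ((p : ℝ) ^ x.factorization p) ^ δ = (x : ℝ) ^ δ := by
    rw [Real.finsetProd_rpow _ _ (fun _ _ => by positivity)]
    congr 1
    have := Nat.prod_factorization_pow_eq_self hx
    rw [Finsupp.prod, Nat.support_factorization] at this
    exact_mod_cast this
  rw [h4]
  gcongr
  rw [Finset.prod_ite, Finset.prod_const, Finset.prod_const_one, mul_one]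
  apply pow_le_pow_right₀ hK
  refine le_trans (Finset.card_le_card (t := Finset.range P) ?_) (Finset.card_range P).le
  intro p hp
  exact Finset.mem_range.2 (Finset.mem_filter.1 hp).2

/-- For fixed `b`, the number of admissible `a`. -/
lemma fiber_count {n : ℕ} (hn0 : n ≠ 0) (hne : Even n) (D₀ : ℕ) (hD : D₀ ≠ 0) (A : ℕ) (hA : A ≠ 0)
    (h : ℕ) (hh : h ≠ 0) {r : ℕ} (hrn : r ≤ n) (b : ℤ) (hb : b ≠ 0) (hbh : b.natAbs ≤ h)
    (S : Finset ℤ)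
    (hS : ∀ a ∈ S, a.natAbs ≤ h ∧ ∃ s : ℤ, (s = 1 ∨ s = -1) ∧ ∃ y : ℤ,
      y ^ 2 = s * ((A : ℤ) * b ^ r - D₀ * a ^ n)) :
    S.card ≤ (9 * (Nat.log 2 (2 * ((A + D₀) * h ^ n) ^ 2) + 1)) *
      ((4 * D₀) * (A * b.natAbs ^ r).divisors.card) * (A * b.natAbs ^ r).divisors.card * 6 := by
  classical
  have hS' : ∀ a : ℤ, ∃ s y : ℤ, a ∈ S → (s = 1 ∨ s = -1) ∧
      y ^ 2 = s * ((A : ℤ) * b ^ r - D₀ * a ^ n) := by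
    intro a
    by_cases ha : a ∈ S
    · obtain ⟨-, s, hs, y, hy⟩ := hS a ha
      exact ⟨s, y, fun _ => ⟨hs, hy⟩⟩
    · exact ⟨0, 0, fun h => absurd h ha⟩
  choose s y hsy using hS'
  obtain ⟨k, hk⟩ := hne
  have hk0 : k ≠ 0 := by omega
  have h6 : (({1, -1} : Finset ℤ) ×ˢ ({-1, 0, 1} : Finset ℤ)).card = 6 := by decide
  rw [← h6]
  refine Finset.card_le_mul_card_image_of_maps_to (f := fun a => (s a, a.sign)) ?_ _ ?_
  · intro a ha
    rw [Finset.mem_product]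
    refine ⟨?_, sign_mem a⟩
    simpa using (hsy a ha).1
  · rintro ⟨s₀, σ⟩ hs₀
    rw [Finset.mem_product] at hs₀
    have hs1 : s₀ = 1 ∨ s₀ = -1 := by simpa using hs₀.1
    have hs1' : s₀ ^ 2 = 1 := by rcases hs1 with rfl | rfl <;> norm_num
    have hsn : s₀.natAbs = 1 := by rcases hs1 with rfl | rfl <;> rfl
    have hs10 : s₀ ≠ 0 := by rintro rfl; norm_num at hs1'
    set F := S.filter (fun a => (s a, a.sign) = (s₀, σ)) with hF
    have hinj : Set.InjOn (fun a : ℤ => (y a, a ^ k)) F := by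
      intro a ha a' ha' haa
      simp only [hF, Finset.coe_filter, Set.mem_ofPred_eq, Prod.mk.injEq] at ha ha' haa
      have h1 : |a| = |a'| := by
        have : |a| ^ k = |a'| ^ k := by rw [← abs_pow, ← abs_pow, haa.2]
        exact (pow_left_inj₀ (abs_nonneg _) (abs_nonneg _) hk0).1 this
      rw [← Int.sign_mul_abs a, ← Int.sign_mul_abs a', ha.2.2, ha'.2.2, h1]
    rw [← Finset.card_image_of_injOn hinj]
    have hcount := norm_count (D := -s₀ * D₀) (N := s₀ * (A * b ^ r))
      (by simp [hs10, hD]) (by simp [hs10, hA, hb]) ((A + D₀) * h ^ n)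
      (F.image (fun a : ℤ => (y a, a ^ k))) ?_
    · simpa [Int.natAbs_mul, hsn, Int.natAbs_pow] using hcount
    · intro x hx
      obtain ⟨a, ha, rfl⟩ := Finset.mem_image.1 hx
      simp only [hF, Finset.mem_filter, Prod.mk.injEq] at ha
      have h1 := hsy a ha.1
      rw [ha.2.1] at h1
      have hah := (hS a ha.1).1
      refine ⟨?_, ?_, ?_⟩
      · have h2 : a ^ n = (a ^ k) ^ 2 := by rw [← pow_mul]; congr 1; omega
        simp only
        rw [h1.2, h2]; ring
      · simp only
        have h3 : (y a).natAbs ^ 2 ≤ (A + D₀) * h ^ n := by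
          rw [← Int.natAbs_pow, h1.2, Int.natAbs_mul, hsn, one_mul]
          refine (Int.natAbs_sub_le _ _).trans ?_
          simp only [Int.natAbs_mul, Int.natAbs_pow, Int.natAbs_natCast]
          rw [add_mul]
          gcongr
          omega
        refine le_trans ?_ h3
        exact Nat.le_self_pow (by norm_num) _
      · simp only
        rw [Int.natAbs_pow]
        calc a.natAbs ^ k ≤ h ^ n :=
              (Nat.pow_le_pow_left hah k).trans (Nat.pow_le_pow_right (by omega) (by omega))
          _ ≤ _ := Nat.le_mul_of_pos_left _ (by omega)

/-- Let `n` and `r` be coprime with `n > r`, `n ≥ 10` and `n` even. Then there are at most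
`O_{n,ε}(H^(1+ε))` pairs `(a_r, a_n)` of integers of absolute value at most `H` such that
`X^n + a_r X^(n-r) + a_n` is irreducible over `ℚ` and the Galois group of its splitting field
over `ℚ` is isomorphic to the alternating group `Aₙ`. -/
theorem count_trinomials_alternating (n r : ℕ) (hr : 0 < r) (hrn : r < n)
    (hco : Nat.Coprime n r) (hn : 10 ≤ n) (hne : Even n) (ε : ℝ) (hε : 0 < ε) :
    ∃ C : ℝ, ∀ H : ℝ, 1 ≤ H →
      (Set.ncard {p : ℤ × ℤ |
          (|p.1| : ℝ) ≤ H ∧ (|p.2| : ℝ) ≤ H ∧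
          Irreducible (X ^ n + Polynomial.C ((p.1 : ℚ)) * X ^ (n - r) +
            Polynomial.C ((p.2 : ℚ)) : Polynomial ℚ) ∧
          Nonempty ((X ^ n + Polynomial.C ((p.1 : ℚ)) * X ^ (n - r) +
              Polynomial.C ((p.2 : ℚ)) : Polynomial ℚ).Gal ≃* alternatingGroup (Fin n))} : ℝ)
        ≤ C * H ^ (1 + ε) := by
  classical
  have hn0 : (0 : ℝ) < n := by exact_mod_cast (by omega : 0 < n)
  set δ : ℝ := ε / (4 * n) with hδdef
  have hδ : 0 < δ := by positivity
  obtain ⟨K₁, hK₁, hlog⟩ := log_bound δ hδ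
  obtain ⟨K₂, hK₂, hdiv⟩ := divisor_bound δ hδ
  set D₀ : ℕ := r ^ r * (n - r) ^ (n - r) with hD₀
  have hD₀0 : D₀ ≠ 0 := by
    have : n - r ≠ 0 := by omega
    have := hr.ne'
    positivity
  set A : ℕ := n ^ n with hA
  have hA0 : A ≠ 0 := pow_ne_zero _ (by omega)
  refine ⟨(9 * (K₁ * ((2 * (A + D₀) ^ 2 : ℕ) : ℝ) ^ δ)) * ((4 * D₀) * (K₂ * (A : ℝ) ^ δ)) *
    (K₂ * (A : ℝ) ^ δ) * 6 * 3, fun H hH => ?_⟩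
  set U := {p : ℤ × ℤ |
          (|p.1| : ℝ) ≤ H ∧ (|p.2| : ℝ) ≤ H ∧
          Irreducible (X ^ n + Polynomial.C ((p.1 : ℚ)) * X ^ (n - r) +
            Polynomial.C ((p.2 : ℚ)) : Polynomial ℚ) ∧
          Nonempty ((X ^ n + Polynomial.C ((p.1 : ℚ)) * X ^ (n - r) +
              Polynomial.C ((p.2 : ℚ)) : Polynomial ℚ).Gal ≃* alternatingGroup (Fin n))} with hU
  set h := ⌊H⌋₊ with hhdef
  have hH0 : 0 ≤ H := by linarith
  have hhH : (h : ℝ) ≤ H := Nat.floor_le hH0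
  have hh0 : h ≠ 0 := by
    have : 1 ≤ h := Nat.le_floor (by exact_mod_cast hH)
    omega
  have hnat : ∀ z : ℤ, |(z : ℝ)| ≤ H → z.natAbs ≤ h := by
    intro z hz
    apply Nat.le_floor
    rw [Nat.cast_natAbs]
    exact_mod_cast hz
  have hUfin : U.Finite := by
    apply Set.Finite.subset (Finset.finite_toSet
      ((Finset.Icc (-(h : ℤ)) h) ×ˢ (Finset.Icc (-(h : ℤ)) h)))
    intro p hp
    have h1 := hnat _ hp.1
    have h2 := hnat _ hp.2.1
    simp only [Finset.coe_product, Set.mem_prod, Finset.mem_coe, Finset.mem_Icc]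
    omega
  rw [Set.ncard_eq_toFinset_card U hUfin]
  set V := hUfin.toFinset with hV
  have hVU : ∀ p ∈ V, p ∈ U := fun p hp => hUfin.mem_toFinset.1 hp
  have hpow : ∀ c m : ℕ, ((c * h ^ m : ℕ) : ℝ) ^ δ ≤ (c : ℝ) ^ δ * H ^ (m * δ) := by
    intro c m
    push_cast
    rw [Real.mul_rpow (by positivity) (by positivity), Real.rpow_mul hH0, Real.rpow_natCast]
    gcongr
  have hcard : ∀ b ∈ Finset.Icc (-(h : ℤ)) h,
      ((V.filter (fun p => p.2 = b)).card : ℝ) ≤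
      (9 * (K₁ * ((2 * (A + D₀) ^ 2 : ℕ) : ℝ) ^ δ)) * ((4 * D₀) * (K₂ * (A : ℝ) ^ δ)) *
        (K₂ * (A : ℝ) ^ δ) * 6 * H ^ ε := by
    intro b hb
    rw [Finset.mem_Icc] at hb
    rcases (V.filter (fun p => p.2 = b)).eq_empty_or_nonempty with h0 | ⟨q, hq⟩
    · rw [h0]
      simp only [Finset.card_empty, Nat.cast_zero]
      positivity
    have hsq : ∀ p ∈ V, _ := fun p hp =>
      trinomial_sq hr hrn hco (by omega) hne p.1 p.2 (hVU p hp).2.2.1 (hVU p hp).2.2.2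
    have hb0 : b ≠ 0 := by
      rw [Finset.mem_filter] at hq
      rw [← hq.2]
      exact (hsq q hq.1).1
    have hbh : b.natAbs ≤ h := by omega
    have hinj : Set.InjOn (fun p : ℤ × ℤ => p.1) (V.filter (fun p => p.2 = b)) := by
      intro p hp p' hp' hpp
      simp only [Finset.coe_filter, Set.mem_ofPred_eq] at hp hp'
      exact Prod.ext hpp (hp.2.trans hp'.2.symm)
    rw [← Finset.card_image_of_injOn hinj]
    have hmain := fiber_count (by omega) hne D₀ hD₀0 A hA0 h hh0 hrn.le b hb0 hbh
      ((V.filter (fun p => p.2 = b)).image (fun p : ℤ × ℤ => p.1)) (by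
        intro a ha
        obtain ⟨p, hp, rfl⟩ := Finset.mem_image.1 ha
        rw [Finset.mem_filter] at hp
        refine ⟨hnat _ (hVU p hp.1).1, ?_⟩
        have := (hsq p hp.1).2
        rw [hp.2] at this
        rw [hA, hD₀]
        push_cast
        exact this)
    have hd : ((A * b.natAbs ^ r).divisors.card : ℝ) ≤ K₂ * (A : ℝ) ^ δ * H ^ (n * δ) := by
      have hb1 : b.natAbs ≠ 0 := by simpa using hb0
      refine (hdiv _ (mul_ne_zero hA0 (pow_ne_zero _ hb1))).trans ?_
      rw [mul_assoc]
      gcongr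
      refine le_trans ?_ (hpow A n)
      have : A * b.natAbs ^ r ≤ A * h ^ n := by
        gcongr
        omega
      gcongr
    have hl : ((Nat.log 2 (2 * ((A + D₀) * h ^ n) ^ 2) + 1 : ℕ) : ℝ) ≤
        K₁ * ((2 * (A + D₀) ^ 2 : ℕ) : ℝ) ^ δ * H ^ ((2 * n : ℕ) * δ) := by
      refine (hlog _ (by positivity)).trans ?_
      rw [mul_assoc]
      gcongr
      refine le_trans (le_of_eq ?_) (hpow _ _)
      congr 2
      ring
    have hexp : H ^ ((2 * n : ℕ) * δ) * H ^ (n * δ) * H ^ (n * δ) = H ^ ε := by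
      rw [← Real.rpow_add (by linarith), ← Real.rpow_add (by linarith)]
      congr 1
      rw [hδdef]
      push_cast
      field_simp
      ring
    calc _ ≤ (9 * ((Nat.log 2 (2 * ((A + D₀) * h ^ n) ^ 2) + 1 : ℕ) : ℝ)) *
          ((4 * D₀) * ((A * b.natAbs ^ r).divisors.card : ℝ)) *
          ((A * b.natAbs ^ r).divisors.card : ℝ) * 6 := by exact_mod_cast hmain
      _ ≤ (9 * (K₁ * ((2 * (A + D₀) ^ 2 : ℕ) : ℝ) ^ δ * H ^ ((2 * n : ℕ) * δ))) *
          ((4 * D₀) * (K₂ * (A : ℝ) ^ δ * H ^ (n * δ))) *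
          (K₂ * (A : ℝ) ^ δ * H ^ (n * δ)) * 6 := by gcongr
      _ = (9 * (K₁ * ((2 * (A + D₀) ^ 2 : ℕ) : ℝ) ^ δ)) * ((4 * D₀) * (K₂ * (A : ℝ) ^ δ)) *
        (K₂ * (A : ℝ) ^ δ) * 6 *
          (H ^ ((2 * n : ℕ) * δ) * H ^ (n * δ) * H ^ (n * δ)) := by ring
      _ = _ := by rw [hexp]
  have hsum : V.card = ∑ b ∈ Finset.Icc (-(h : ℤ)) h, (V.filter (fun p => p.2 = b)).card := by
    apply Finset.card_eq_sum_card_fiberwise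
    intro p hp
    have := hnat _ (hVU p hp).2.1
    simp only [Finset.mem_coe, Finset.mem_Icc]
    omega
  rw [hsum, Nat.cast_sum]
  refine (Finset.sum_le_sum hcard).trans ?_
  rw [Finset.sum_const, nsmul_eq_mul, Int.card_Icc, Real.rpow_add (by linarith), Real.rpow_one]
  have h3 : (((h : ℤ) + 1 - -(h : ℤ)).toNat : ℝ) ≤ 3 * H := by
    have : ((h : ℤ) + 1 - -(h : ℤ)).toNat = 2 * h + 1 := by omega
    rw [this]
    push_cast
    linarith
  calc _ ≤ 3 * H * ((9 * (K₁ * ((2 * (A + D₀) ^ 2 : ℕ) : ℝ) ^ δ)) *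
        ((4 * D₀) * (K₂ * (A : ℝ) ^ δ)) * (K₂ * (A : ℝ) ^ δ) * 6 * H ^ ε) := by gcongr
    _ = _ := by ring
end

section
/- Let F ∈ ℤ[X_1, X_2] be a polynomial of total degree d ≥ 1 that is irreducible in ℚ[X_1, X_2] but not absolutely irreducible (i.e., F is reducible as a polynomial over an algebraic closure of ℚ, equivalently over ℂ). Then there is a constant C depending only on d such that F has at most C zeros (x_1, x_2) ∈ ℤ² in total. -/
open Polynomial in
lemma aux_natDegree_resultant (p q : ℚ[X][X]) (d : ℕ) (m n : ℕ)
    (hp : ∀ i, (p.coeff i).natDegree ≤ d) (hq : ∀ i, (q.coeff i).natDegree ≤ d) :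
    (resultant p q m n).natDegree ≤ (m + n) * d := by
  unfold resultant
  rw [Matrix.det_apply]
  refine natDegree_sum_le_of_forall_le _ _ fun σ _ => ?_
  refine (natDegree_smul_le _ _).trans ?_
  refine (natDegree_prod_le _ _).trans ?_
  have : ∀ i ∈ (Finset.univ : Finset (Fin (m + n))),
      (sylvester p q m n (σ i) i).natDegree ≤ d := by
    intro i _
    rw [sylvester, Matrix.of_apply]
    refine Fin.addCases (fun j => ?_) (fun j => ?_) i
    · rw [Fin.addCases_left]; split_ifs
      · exact hq _
      · simp
    · rw [Fin.addCases_right]; split_ifs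
      · exact hp _
      · simp
  refine (Finset.sum_le_card_nsmul _ _ d this).trans ?_
  simp

open Polynomial in
lemma aux_elim (p q : ℚ[X][X]) (d : ℕ) (hd : 1 ≤ d)
    (hp : ∀ i, (p.coeff i).natDegree ≤ d) (hq : ∀ i, (q.coeff i).natDegree ≤ d)
    (hpd : p.natDegree ≤ d) (hqd : q.natDegree ≤ d) (hirr : Irreducible p) (hndvd : ¬ p ∣ q) :
    ∃ r : ℚ[X], r ≠ 0 ∧ r.natDegree ≤ 2 * d * d ∧ ∀ a b : ℚ,
      (p.map (evalRingHom b)).eval a = 0 → (q.map (evalRingHom b)).eval a = 0 → r.eval b = 0 := by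
  by_cases h0 : p.natDegree = 0
  · refine ⟨p.coeff 0, ?_, (hp 0).trans (by nlinarith), ?_⟩
    · intro h
      apply hirr.ne_zero
      rw [eq_C_of_natDegree_eq_zero h0, h, C_0]
    · intro a b h _
      rw [eq_C_of_natDegree_eq_zero h0] at h
      simpa using h
  · refine ⟨resultant p q, ?_, ?_, ?_⟩
    · have hprim := hirr.isPrimitive h0
      obtain ⟨inst⟩ : Nonempty (NormalizedGCDMonoid ℚ[X]) := inferInstance
      have h1 : Irreducible (p.map (algebraMap ℚ[X] (RatFunc ℚ))) :=
        hprim.irreducible_iff_irreducible_map_fraction_map.1 hirr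
      have h2 : ¬ p.map (algebraMap ℚ[X] (RatFunc ℚ)) ∣ q.map (algebraMap ℚ[X] (RatFunc ℚ)) :=
        fun h => hndvd (hprim.dvd_of_fraction_map_dvd_fraction_map h)
      have h3 : IsCoprime (p.map (algebraMap ℚ[X] (RatFunc ℚ)))
          (q.map (algebraMap ℚ[X] (RatFunc ℚ))) := (h1.coprime_iff_not_dvd).2 h2
      have h4 := resultant_ne_zero _ _ h3
      have hinj : Function.Injective (algebraMap ℚ[X] (RatFunc ℚ)) :=
        IsFractionRing.injective _ _
      rw [natDegree_map_eq_of_injective hinj, natDegree_map_eq_of_injective hinj,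
        resultant_map_map] at h4
      intro h
      rw [h] at h4
      simp at h4
    · refine (aux_natDegree_resultant p q d _ _ hp hq).trans ?_
      gcongr; omega
    · intro a b h1 h2
      obtain ⟨u, v, -, -, e⟩ := exists_mul_add_mul_eq_C_resultant p q le_rfl le_rfl (Or.inl h0)
      have := congrArg (fun s => (s.map (evalRingHom b)).eval a) e
      simp only [Polynomial.map_add, Polynomial.map_mul, eval_add, eval_mul, h1, h2, zero_mul,
        add_zero, map_C, eval_C, coe_evalRingHom] at this
      exact this.symm

open Polynomial in
noncomputable def auxEquiv : MvPolynomial (Fin 2) ℚ ≃+* ℚ[X][X] :=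
  (MvPolynomial.finSuccEquiv ℚ 1).toRingEquiv.trans
    (Polynomial.mapEquiv (MvPolynomial.uniqueAlgEquiv ℚ (Fin 1)).toRingEquiv)

open Polynomial in
lemma auxEquiv_apply (P : MvPolynomial (Fin 2) ℚ) :
    auxEquiv P = (MvPolynomial.finSuccEquiv ℚ 1 P).map
      (MvPolynomial.uniqueAlgEquiv ℚ (Fin 1)).toRingEquiv.toRingHom := rfl

open Polynomial in
lemma auxEquiv_eval (P : MvPolynomial (Fin 2) ℚ) (a b : ℚ) :
    ((auxEquiv P).map (evalRingHom b)).eval a = MvPolynomial.eval ![a, b] P := by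
  rw [auxEquiv_apply, Polynomial.map_map]
  have := MvPolynomial.eval_eq_eval_mv_eval' ![b] a P
  rw [show (![a, b] : Fin 2 → ℚ) = Fin.cons a ![b] from rfl, this]
  congr 2
  apply MvPolynomial.ringHom_ext
  · intro r; simp
  · intro i; fin_cases i; simp

open Polynomial in
lemma auxEquiv_natDegree (P : MvPolynomial (Fin 2) ℚ) :
    (auxEquiv P).natDegree ≤ P.totalDegree := by
  rw [auxEquiv_apply]
  refine natDegree_map_le.trans ?_
  rw [MvPolynomial.natDegree_finSuccEquiv]
  exact MvPolynomial.degreeOf_le_totalDegree _ _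

open Polynomial in
lemma auxEquiv_coeff_natDegree (P : MvPolynomial (Fin 2) ℚ) (i : ℕ) :
    ((auxEquiv P).coeff i).natDegree ≤ P.totalDegree := by
  rw [auxEquiv_apply, coeff_map]
  by_cases h : (MvPolynomial.finSuccEquiv ℚ 1 P).coeff i = 0
  · rw [h]; simp
  · have h1 := MvPolynomial.totalDegree_coeff_finSuccEquiv_add_le P i h
    have h2 := MvPolynomial.aeval_natDegree_le ((MvPolynomial.finSuccEquiv ℚ 1 P).coeff i)
      le_rfl (fun _ => (X : ℚ[X])) (n := 1) (fun _ => natDegree_X_le)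
    refine le_trans (le_of_eq ?_) (h2.trans (by omega))
    rfl

open Polynomial in
lemma auxEquiv_fiber (P : MvPolynomial (Fin 2) ℚ) (hirr : Irreducible P)
    (hd : 2 ≤ P.totalDegree) (b : ℚ) : (auxEquiv P).map (evalRingHom b) ≠ 0 := by
  intro h
  have h1 : C (X - C b) ∣ auxEquiv P := by
    rw [C_dvd_iff_dvd_coeff]
    intro i
    rw [dvd_iff_isRoot]
    have := congrArg (fun s => s.coeff i) h
    simpa using this
  have h2 : auxEquiv (MvPolynomial.X 1 - MvPolynomial.C b) = C (X - C b) := by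
    rw [auxEquiv_apply, map_sub, show (1 : Fin 2) = Fin.succ 0 from rfl,
      MvPolynomial.finSuccEquiv_X_succ]
    simp [MvPolynomial.finSuccEquiv_apply]
  rw [← h2, map_dvd_iff] at h1
  obtain ⟨u, hu⟩ := h1
  have hdeg : (MvPolynomial.X 1 - MvPolynomial.C b : MvPolynomial (Fin 2) ℚ).totalDegree = 1 := by
    rw [sub_eq_add_neg, ← map_neg, MvPolynomial.totalDegree_add_eq_left_of_totalDegree_lt]
    · simp
    · simp
  rcases hirr.isUnit_or_isUnit hu with hx | hx
  · rw [MvPolynomial.isUnit_iff_totalDegree_of_isReduced] at hx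
    omega
  · rw [MvPolynomial.isUnit_iff_totalDegree_of_isReduced] at hx
    have := MvPolynomial.totalDegree_mul (MvPolynomial.X 1 - MvPolynomial.C b) u
    rw [← hu] at this
    omega

open Polynomial in
lemma aux_bezout (P Q : MvPolynomial (Fin 2) ℚ) (d : ℕ) (hd : 2 ≤ d) (hP : P.totalDegree = d)
    (hirr : Irreducible P) (hQ0 : Q ≠ 0) (hQ : Q.totalDegree < d) :
    ∃ T : Finset (ℚ × ℚ), T.card ≤ 2 * d * d * d ∧ ∀ a b : ℚ,
      MvPolynomial.eval ![a, b] P = 0 → MvPolynomial.eval ![a, b] Q = 0 → (a, b) ∈ T := by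
  classical
  have hnd : ¬ auxEquiv P ∣ auxEquiv Q := by
    rw [map_dvd_iff]
    rintro ⟨u, rfl⟩
    rw [MvPolynomial.totalDegree_mul_of_isDomain (left_ne_zero_of_mul hQ0)
      (right_ne_zero_of_mul hQ0)] at hQ
    omega
  obtain ⟨r, hr0, hrd, hr⟩ := aux_elim (auxEquiv P) (auxEquiv Q) d (by omega)
    (fun i => (auxEquiv_coeff_natDegree P i).trans hP.le)
    (fun i => (auxEquiv_coeff_natDegree Q i).trans hQ.le)
    ((auxEquiv_natDegree P).trans hP.le) ((auxEquiv_natDegree Q).trans hQ.le)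
    ((MulEquiv.irreducible_iff auxEquiv).2 hirr) hnd
  refine ⟨r.roots.toFinset.biUnion fun b =>
    ((auxEquiv P).map (evalRingHom b)).roots.toFinset.image fun a => (a, b), ?_, ?_⟩
  · refine (Finset.card_biUnion_le_card_mul _ _ d fun b _ => ?_).trans ?_
    · refine Finset.card_image_le.trans ((Multiset.toFinset_card_le _).trans
        ((card_roots' _).trans (natDegree_map_le.trans ((auxEquiv_natDegree P).trans hP.le))))
    · gcongr
      exact (Multiset.toFinset_card_le _).trans ((card_roots' _).trans hrd)
  · intro a b h1 h2
    rw [← auxEquiv_eval] at h1 h2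
    simp only [Finset.mem_biUnion, Finset.mem_image, Multiset.mem_toFinset]
    exact ⟨b, (mem_roots hr0).2 (hr a b h1 h2), a,
      (mem_roots (auxEquiv_fiber P hirr (by omega) b)).2 h1, rfl⟩

lemma aux_descend (G : MvPolynomial (Fin 2) ℂ) (hG : G ≠ 0) :
    ∃ Q : MvPolynomial (Fin 2) ℚ, Q ≠ 0 ∧ Q.totalDegree ≤ G.totalDegree ∧ ∀ x : Fin 2 → ℚ,
      MvPolynomial.eval (fun i => (x i : ℂ)) G = 0 → MvPolynomial.eval x Q = 0 := by
  obtain ⟨m, hm⟩ := MvPolynomial.ne_zero_iff.1 hG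
  obtain ⟨f, hf⟩ : ∃ f : Module.Dual ℚ ℂ, f (G.coeff m) ≠ 0 := by
    by_contra! h
    exact hm ((Module.forall_dual_apply_eq_zero_iff ℚ _).1 h)
  let Q : MvPolynomial (Fin 2) ℚ := ∑ k ∈ G.support, MvPolynomial.monomial k (f (G.coeff k))
  refine ⟨Q, ?_, ?_, ?_⟩
  · rw [MvPolynomial.ne_zero_iff]
    refine ⟨m, ?_⟩
    simpa [Q, MvPolynomial.coeff_sum, MvPolynomial.coeff_monomial, hm] using hf
  · refine MvPolynomial.totalDegree_finsetSum_le fun k hk => ?_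
    exact (MvPolynomial.totalDegree_monomial_le _ _).trans (MvPolynomial.le_totalDegree hk)
  · intro x hx
    rw [MvPolynomial.eval_eq] at hx
    have h := congrArg f hx
    rw [map_sum, map_zero] at h
    rw [map_sum, ← h]
    refine Finset.sum_congr rfl fun k _ => ?_
    rw [MvPolynomial.eval_monomial, Finsupp.prod_fintype _ _ (by simp)]
    have : (G.coeff k * ∏ i, (x i : ℂ) ^ k i) = (∏ i, x i ^ k i) • G.coeff k := by
      rw [Rat.smul_def]; push_cast; ring
    have h3 : (∏ i ∈ k.support, (x i : ℂ) ^ k i) = ∏ i, (x i : ℂ) ^ k i :=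
      Finset.prod_subset (Finset.subset_univ _) (by intro i _ hi; simp at hi; simp [hi])
    rw [h3, this, map_smul, smul_eq_mul, mul_comm]


/-- A polynomial `F ∈ ℤ[X₁, X₂]` of total degree `d ≥ 1` which is irreducible over `ℚ` but not
absolutely irreducible (i.e. reducible over `ℂ`) has at most `O_d(1)` integer zeros in total. -/
theorem finitely_many_integral_points_not_absolutely_irreducible (d : ℕ) (hd : 1 ≤ d) :
    ∃ C : ℕ, ∀ F : MvPolynomial (Fin 2) ℤ,
      F.totalDegree = d →
      Irreducible (MvPolynomial.map (Int.castRingHom ℚ) F) →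
      ¬ Irreducible (MvPolynomial.map (Int.castRingHom ℂ) F) →
      {x : ℤ × ℤ | MvPolynomial.eval (fun i => if i = 0 then x.1 else x.2) F = 0}.Finite ∧
      Set.ncard {x : ℤ × ℤ |
        MvPolynomial.eval (fun i => if i = 0 then x.1 else x.2) F = 0} ≤ C := by
  refine ⟨4 * d * d * d, fun F hF hirr hred => ?_⟩
  classical
  set P := MvPolynomial.map (Int.castRingHom ℚ) F with hPdef
  set FC := MvPolynomial.map (Int.castRingHom ℂ) F with hFC
  have hPd : P.totalDegree = d := by
    rw [← hF]
    rw [MvPolynomial.totalDegree, MvPolynomial.totalDegree,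
      MvPolynomial.support_map_of_injective _ (RingHom.injective_int _)]
  have hCd : FC.totalDegree = d := by
    rw [← hF]
    rw [MvPolynomial.totalDegree, MvPolynomial.totalDegree,
      MvPolynomial.support_map_of_injective _ (RingHom.injective_int _)]
  have hnu : ¬ IsUnit FC := by
    rw [MvPolynomial.isUnit_iff_totalDegree_of_isReduced]
    omega
  have hC0 : FC ≠ 0 := by
    intro h
    rw [h, MvPolynomial.totalDegree_zero] at hCd
    omega
  obtain ⟨G, H, hGH, hGu, hHu⟩ : ∃ G H, FC = G * H ∧ ¬ IsUnit G ∧ ¬ IsUnit H := by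
    by_contra! h
    exact hred ⟨hnu, fun a b hab => or_iff_not_imp_left.2 fun ha => by
      by_contra hb
      exact hb (h a b hab ha)⟩
  have hG0 : G ≠ 0 := by rintro rfl; simp at hGH; exact hC0 hGH
  have hH0 : H ≠ 0 := by rintro rfl; simp at hGH; exact hC0 hGH
  have hpos : ∀ K : MvPolynomial (Fin 2) ℂ, K ≠ 0 → ¬ IsUnit K → 1 ≤ K.totalDegree := by
    intro K hK hKu
    by_contra! h
    have h0 : K.totalDegree = 0 := by omega
    refine hKu (MvPolynomial.isUnit_iff_totalDegree_of_isReduced.2 ⟨?_, h0⟩)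
    rw [MvPolynomial.totalDegree_eq_zero_iff_eq_C] at h0
    rw [isUnit_iff_ne_zero]
    intro hc
    rw [hc, map_zero] at h0
    exact hK h0
  have hG1 := hpos G hG0 hGu
  have hH1 := hpos H hH0 hHu
  have hsum : d = G.totalDegree + H.totalDegree := by
    rw [← hCd, hGH, MvPolynomial.totalDegree_mul_of_isDomain hG0 hH0]
  obtain ⟨Q₁, hQ₁0, hQ₁d, hQ₁⟩ := aux_descend G hG0
  obtain ⟨Q₂, hQ₂0, hQ₂d, hQ₂⟩ := aux_descend H hH0
  obtain ⟨T₁, hT₁c, hT₁⟩ := aux_bezout P Q₁ d (by omega) hPd hirr hQ₁0 (by omega)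
  obtain ⟨T₂, hT₂c, hT₂⟩ := aux_bezout P Q₂ d (by omega) hPd hirr hQ₂0 (by omega)
  set S := {x : ℤ × ℤ | MvPolynomial.eval (fun i => if i = 0 then x.1 else x.2) F = 0} with hS
  let j : ℤ × ℤ → ℚ × ℚ := fun x => ((x.1 : ℚ), (x.2 : ℚ))
  have hj : Function.Injective j := by
    rintro ⟨a, b⟩ ⟨a₂, b₂⟩ h
    simpa [j] using h
  have hmaps : ∀ x ∈ S, j x ∈ (T₁ ∪ T₂ : Finset (ℚ × ℚ)) := by
    rintro ⟨a, b⟩ hx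
    have hx' : MvPolynomial.eval (fun i : Fin 2 => if i = 0 then a else b) F = 0 := hx
    have hP0 : MvPolynomial.eval ![(a : ℚ), (b : ℚ)] P = 0 := by
      have h := congrArg (Int.castRingHom ℚ) hx'
      rw [map_zero, MvPolynomial.map_eval] at h
      rw [← h]
      congr 2
      ext i
      fin_cases i <;> simp
    have hF0 : MvPolynomial.eval (fun i => ((![(a : ℚ), (b : ℚ)] i : ℚ) : ℂ)) FC = 0 := by
      have h := congrArg (Int.castRingHom ℂ) hx'
      rw [map_zero, MvPolynomial.map_eval] at h
      rw [← h]
      congr 2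
      ext i
      fin_cases i <;> simp
    rw [hGH, map_mul] at hF0
    rw [Finset.mem_union]
    rcases mul_eq_zero.1 hF0 with h | h
    · exact Or.inl (hT₁ _ _ hP0 (hQ₁ _ h))
    · exact Or.inr (hT₂ _ _ hP0 (hQ₂ _ h))
  have hfin : S.Finite :=
    Set.Finite.of_finite_image ((T₁ ∪ T₂).finite_toSet.subset
      (by rintro _ ⟨x, hx, rfl⟩; exact hmaps x hx)) hj.injOn
  refine ⟨hfin, ?_⟩
  have h1 : S.ncard ≤ ((T₁ ∪ T₂ : Finset (ℚ × ℚ)) : Set (ℚ × ℚ)).ncard :=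
    Set.ncard_le_ncard_of_injOn j (fun x hx => hmaps x hx) hj.injOn (Finset.finite_toSet _)
  rw [Set.ncard_coe_finset] at h1
  have h2 := Finset.card_union_le T₁ T₂
  calc S.ncard ≤ T₁.card + T₂.card := h1.trans h2
    _ ≤ 2 * d * d * d + 2 * d * d * d := by omega
    _ = 4 * d * d * d := by ring
end

section
/- Let m ≥ 1 be an integer, let α ≥ 1 be a real number, let ε > 0, and let Φ ∈ ℤ[z, t] be irreducible in ℚ[z, t] such that the monomial z^m occurs in Φ with nonzero coefficient. Then there exists a constant C, depending only on the total degree of Φ, on α and on ε, such that for every real H ≥ 2 the number of pairs (z, t) ∈ ℤ² with |z| ≤ H^α, |t| ≤ H and Φ(z, t) = 0 is at most C·H^{1/m+ε}. -/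
namespace BP

open Polynomial Polynomial.Bivariate

/-- `(a,b)` is the leading exponent of `P` for the weights `(α,1)`, ties broken by `i`. -/
def IsLead (α : ℝ) (P : ℚ[X][Y]) (a b : ℕ) : Prop :=
  (P.coeff a).coeff b ≠ 0 ∧ ∀ i j : ℕ, (P.coeff i).coeff j ≠ 0 →
    α * i + j < α * a + b ∨ (α * i + j = α * a + b ∧ i ≤ a)

lemma exists_isLead (α : ℝ) (P : ℚ[X][Y]) (hP : P ≠ 0) : ∃ a b, IsLead α P a b := by
  classical
  let s : Finset (ℕ × ℕ) := P.support.biUnion fun i => (P.coeff i).support.image fun j => (i, j)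
  have hs : ∀ i j, (i, j) ∈ s ↔ (P.coeff i).coeff j ≠ 0 := by
    intro i j
    simp only [s, Finset.mem_biUnion, Finset.mem_image, mem_support_iff, Prod.mk.injEq]
    constructor
    · rintro ⟨i', _, j', h, rfl, rfl⟩; exact h
    · intro h
      exact ⟨i, fun h0 => h (by simp [h0]), j, h, rfl, rfl⟩
  have hne : s.Nonempty := by
    by_contra h
    rw [Finset.not_nonempty_iff_eq_empty] at h
    apply hP
    ext i j
    by_contra h1
    have : (i, j) ∈ s := (hs i j).2 (by simpa using h1)
    simp [h] at this
  obtain ⟨⟨a, b⟩, hab, hmax⟩ := Finset.exists_max_image s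
    (fun p => toLex (α * (p.1 : ℝ) + p.2, p.1)) hne
  refine ⟨a, b, (hs a b).1 hab, fun i j hij => ?_⟩
  have := hmax (i, j) ((hs i j).2 hij)
  rw [Prod.Lex.toLex_le_toLex] at this
  simpa using this

lemma IsLead.mul {α : ℝ} {P Q : ℚ[X][Y]} {a b a' b' : ℕ} (hP : IsLead α P a b)
    (hQ : IsLead α Q a' b') : ((P * Q).coeff (a + a')).coeff (b + b') ≠ 0 := by
  have h : ((P * Q).coeff (a + a')).coeff (b + b') =
      (P.coeff a).coeff b * (Q.coeff a').coeff b' := by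
    rw [coeff_mul, finsetSum_coeff]
    have key : ∀ i i' j j' : ℕ, i + i' = a + a' → j + j' = b + b' →
        (P.coeff i).coeff j ≠ 0 → (Q.coeff i').coeff j' ≠ 0 → i = a ∧ j = b := by
      intro i i' j j' hi hj h1 h2
      have e1 := hP.2 i j h1
      have e2 := hQ.2 i' j' h2
      have hi' : (i : ℝ) + i' = a + a' := by exact_mod_cast hi
      have hj' : (j : ℝ) + j' = b + b' := by exact_mod_cast hj
      have hs : (α * i + j) + (α * i' + j') = (α * a + b) + (α * a' + b') := by
        linear_combination α * hi' + hj'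
      rcases e1 with e1 | ⟨e1, f1⟩
      · rcases e2 with e2 | ⟨e2, f2⟩ <;> linarith
      · rcases e2 with e2 | ⟨e2, f2⟩
        · linarith
        · have : i = a := by omega
          subst this
          refine ⟨rfl, ?_⟩
          have : (j : ℝ) = b := by linarith
          exact_mod_cast this
    rw [Finset.sum_eq_single (a, a')]
    · rw [coeff_mul, Finset.sum_eq_single (b, b')]
      · rintro ⟨j, j'⟩ hj hne
        rw [Finset.HasAntidiagonal.mem_antidiagonal] at hj
        by_contra hc
        have := key a a' j j' rfl hj (left_ne_zero_of_mul hc) (right_ne_zero_of_mul hc)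
        apply hne
        simp only [Prod.mk.injEq]
        simp only at hj
        omega
      · intro h; simp at h
    · rintro ⟨i, i'⟩ hi hne
      rw [Finset.HasAntidiagonal.mem_antidiagonal] at hi
      rw [coeff_mul]
      apply Finset.sum_eq_zero
      rintro ⟨j, j'⟩ hj
      rw [Finset.HasAntidiagonal.mem_antidiagonal] at hj
      by_contra hc
      have := key i i' j j' hi hj (left_ne_zero_of_mul hc) (right_ne_zero_of_mul hc)
      apply hne
      simp only [Prod.mk.injEq]
      simp only at hi
      omega
    · intro h; simp at h
  rw [h]
  exact mul_ne_zero hP.1 hQ.1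

lemma not_dvd_of_isLead {α : ℝ} {F G : ℚ[X][Y]} {a b : ℕ} (hF : IsLead α F a b) (hG : G ≠ 0)
    (h : ∀ i j, a ≤ i → b ≤ j → (G.coeff i).coeff j = 0) : ¬ F ∣ G := by
  rintro ⟨Q, rfl⟩
  obtain ⟨a', b', hQ⟩ := exists_isLead α Q (right_ne_zero_of_mul hG)
  exact hF.mul hQ (h _ _ (by omega) (by omega))

lemma eq_const_mul_of_dvd {F G : ℚ[X][Y]} (hG : G ≠ 0) (hd : F ∣ G)
    (h : ∀ i j, (F.coeff i).coeff j = 0 → (G.coeff i).coeff j = 0) :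
    ∃ q : ℚ, q ≠ 0 ∧ G = F * C (C q) := by
  obtain ⟨Q, rfl⟩ := hd
  obtain ⟨a, b, hF⟩ := exists_isLead 1 F (left_ne_zero_of_mul hG)
  obtain ⟨a', b', hQ⟩ := exists_isLead 1 Q (right_ne_zero_of_mul hG)
  have h1 : (F.coeff (a + a')).coeff (b + b') ≠ 0 := fun h0 => hF.mul hQ (h _ _ h0)
  have h2 := hF.2 _ _ h1
  push_cast at h2
  have h3 : (a' : ℝ) + b' ≤ 0 := by
    rcases h2 with h2 | ⟨h2, _⟩ <;> linarith
  have h4 : a' + b' ≤ 0 := by exact_mod_cast h3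
  have hz : ∀ i j, (Q.coeff i).coeff j ≠ 0 → i = 0 ∧ j = 0 := by
    intro i j hij
    have h5 := hQ.2 i j hij
    have h6 : (i : ℝ) + j ≤ a' + b' := by
      rcases h5 with h5 | ⟨h5, _⟩ <;> linarith
    have h7 : i + j ≤ a' + b' := by exact_mod_cast h6
    omega
  have hQe : Q = C (C ((Q.coeff 0).coeff 0)) := by
    ext i j
    by_cases hij : i = 0 ∧ j = 0
    · obtain ⟨rfl, rfl⟩ := hij; simp
    · have e1 : (Q.coeff i).coeff j = 0 := by
        by_contra hc; exact hij (hz i j hc)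
      rw [e1, coeff_C]
      split_ifs with hi
      · rw [coeff_C, if_neg]
        intro hj; exact hij ⟨hi, hj⟩
      · simp
  refine ⟨(Q.coeff 0).coeff 0, ?_, by rw [← hQe]⟩
  intro h0
  rw [h0] at hQe
  exact right_ne_zero_of_mul hG (by simpa using hQe)

/-- Weak Bezout. -/
lemma bezout (D : ℕ) (F G : ℚ[X][Y]) (hF : Irreducible F) (hFd : 0 < F.natDegree)
    (hFG : ¬ F ∣ G) (hF1 : F.natDegree ≤ D) (hF2 : ∀ i, (F.coeff i).natDegree ≤ D)
    (hG1 : G.natDegree ≤ D) (hG2 : ∀ i, (G.coeff i).natDegree ≤ D)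
    (S : Finset (ℤ × ℤ)) (hS : ∀ p ∈ S, F.evalEval (p.2 : ℚ) (p.1 : ℚ) = 0 ∧
      G.evalEval (p.2 : ℚ) (p.1 : ℚ) = 0) : S.card ≤ D * (2 * D * D) := by
  classical
  have hprim : F.IsPrimitive := hF.isPrimitive (by omega)
  set R : ℚ[X] := resultant F G with hR
  have hR0 : R ≠ 0 := by
    intro h0
    let φ := algebraMap ℚ[X] (RatFunc ℚ)
    have hφ : Function.Injective φ := IsFractionRing.injective _ _
    have h1 : resultant (F.map φ) (G.map φ) = 0 := by
      rw [natDegree_map_eq_of_injective hφ, natDegree_map_eq_of_injective hφ, resultant_map_map,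
        ← hR, h0, map_zero]
    rw [resultant_eq_zero_iff] at h1
    have h2 : Irreducible (F.map φ) :=
      (hprim.irreducible_iff_irreducible_map_fraction_map).1 hF
    have h3 : F.map φ ∣ G.map φ := by
      rcases h2.isCoprime_or_dvd (G.map φ) with h | h
      · exact absurd h h1.2
      · exact h
    exact hFG (hprim.dvd_of_fraction_map_dvd_fraction_map h3)
  have hRdeg : R.natDegree ≤ 2 * D * D := by
    rw [hR, resultant, Matrix.det_apply]
    apply natDegree_sum_le_of_forall_le
    intro σ _
    refine (natDegree_smul_le _ _).trans ?_
    refine (natDegree_prod_le _ _).trans ?_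
    refine (Finset.sum_le_card_nsmul _ _ D ?_).trans ?_
    · intro i _
      simp only [sylvester, Matrix.of_apply]
      generalize σ i = k
      induction i using Fin.addCases <;> simp <;> split_ifs <;> simp [hF2, hG2]
    · simp
      gcongr
      omega
  have himg : S.image (fun p => (p.2 : ℚ)) ⊆ R.roots.toFinset := by
    intro t ht
    simp only [Finset.mem_image] at ht
    obtain ⟨p, hp, rfl⟩ := ht
    rw [Multiset.mem_toFinset, mem_roots hR0, IsRoot]
    obtain ⟨A, B, -, -, hAB⟩ := exists_mul_add_mul_eq_C_resultant F G le_rfl le_rfl (Or.inl hFd.ne')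
    have h1 := congrArg (evalEval (p.2 : ℚ) (p.1 : ℚ)) hAB
    simp only [evalEval_add, evalEval_mul, evalEval_C, hS p hp] at h1
    rw [hR, ← h1]; simp
  have hcard : (S.image (fun p => (p.2 : ℚ))).card ≤ 2 * D * D :=
    (Finset.card_le_card himg).trans ((Multiset.toFinset_card_le _).trans
      ((card_roots' R).trans hRdeg))
  refine (Finset.card_le_mul_card_image (f := fun p : ℤ × ℤ => (p.2 : ℚ)) S D ?_).trans
    (Nat.mul_le_mul_left _ hcard)
  intro t _
  have hne : F.map (evalRingHom t) ≠ 0 := by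
    intro h0
    have h1 : C (X - C t) ∣ F := by
      rw [C_dvd_iff_dvd_coeff]
      intro i
      rw [dvd_iff_isRoot, IsRoot]
      have := congrArg (fun q => q.coeff i) h0
      simpa using this
    have h2 := hprim _ h1
    exact not_isUnit_X_sub_C t h2
  have hsub : (S.filter (fun p => (p.2 : ℚ) = t)).image (fun p => (p.1 : ℚ)) ⊆
      (F.map (evalRingHom t)).roots.toFinset := by
    intro z hz
    simp only [Finset.mem_image, Finset.mem_filter] at hz
    obtain ⟨p, ⟨hp, rfl⟩, rfl⟩ := hz
    rw [Multiset.mem_toFinset, mem_roots hne, IsRoot, map_evalRingHom_eval]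
    exact (hS p hp).1
  have hinj : ((S.filter (fun p => (p.2 : ℚ) = t)).image (fun p => (p.1 : ℚ))).card =
      (S.filter (fun p => (p.2 : ℚ) = t)).card := by
    apply Finset.card_image_of_injOn
    intro p hp q hq hpq
    simp only at hpq
    simp only [Finset.coe_filter, Set.mem_ofPred_eq] at hp hq
    have e2 : (p.2 : ℚ) = q.2 := hp.2.trans hq.2.symm
    exact Prod.ext (by exact_mod_cast hpq) (by exact_mod_cast e2)
  rw [← hinj]
  exact (Finset.card_le_card hsub).trans ((Multiset.toFinset_card_le _).trans
      ((card_roots' _).trans (natDegree_map_le.trans hF1)))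

end BP

namespace BP

open Polynomial Polynomial.Bivariate

lemma evalEval_modEq (G : ℤ[X][Y]) (p t t1 x z1 : ℤ) (ht : p ∣ t - t1) (hx : p ∣ x - z1) :
    p ∣ G.evalEval t x - G.evalEval t1 z1 := by
  have h1 : p ∣ G.evalEval t x - G.evalEval t z1 := by
    rw [← map_evalRingHom_eval, ← map_evalRingHom_eval]
    exact hx.trans (sub_dvd_eval_sub _ _ _)
  have h2 : p ∣ G.evalEval t z1 - G.evalEval t1 z1 := by
    unfold evalEval
    exact ht.trans (sub_dvd_eval_sub _ _ _)
  have := dvd_add h1 h2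
  simpa using this

lemma hensel (F : ℤ[X][Y]) (p z1 t1 c' : ℤ)
    (hc : p ∣ 1 - c' * (derivative F).evalEval t1 z1) (M : ℕ) :
    ∃ f : ℤ[X], ∀ z t : ℤ, p ∣ z - z1 → p ∣ t - t1 → F.evalEval t z = 0 →
      p ^ (M + 1) ∣ z - f.eval (t - t1) := by
  induction M with
  | zero => exact ⟨C z1, fun z t h _ _ => by simpa using h⟩
  | succ M ih =>
    obtain ⟨f, hf⟩ := ih
    refine ⟨f - C c' * F.eval₂ (compRingHom (X + C t1)) f, fun z t hz ht hF => ?_⟩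
    obtain ⟨y, hy⟩ := hf z t hz ht hF
    set x := f.eval (t - t1) with hx
    have hev : (F.eval₂ (compRingHom (X + C t1)) f).eval (t - t1) = F.evalEval t x := by
      rw [← coe_evalRingHom, hom_eval₂, ← eval₂_evalRingHom]
      congr 1
      ext <;> simp
    rw [eval_sub, eval_mul, eval_C, hev, ← hx]
    obtain ⟨k, hk⟩ := binomExpansion (F.map (evalRingHom t)) x (z - x)
    rw [add_sub_cancel, derivative_map, map_evalRingHom_eval, map_evalRingHom_eval,
      map_evalRingHom_eval, hF] at hk
    have hxz : p ∣ x - z1 := by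
      have h1 : p ∣ z - x := (dvd_pow_self p (Nat.succ_ne_zero M)).trans ⟨y, hy⟩
      have := dvd_sub hz h1
      simpa using this
    have hcx : p ∣ 1 - c' * (derivative F).evalEval t x := by
      obtain ⟨w, hw⟩ := evalEval_modEq (derivative F) p t t1 x z1 ht hxz
      obtain ⟨w', hw'⟩ := hc
      exact ⟨w' - c' * w, by linear_combination hw' - c' * hw⟩
    obtain ⟨w, hw⟩ := hcx
    refine ⟨y * w - c' * k * y ^ 2 * p ^ M, ?_⟩
    set d := (derivative F).evalEval t x
    set P := F.evalEval t x
    have : z - (x - c' * P) = (z - x) * (1 - c' * d) - c' * k * (z - x) ^ 2 := by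
      linear_combination -c' * hk
    rw [this, hw, hy]
    ring

lemma det_dvd_fin (N : ℕ) (p : ℤ) (u : Fin N → ℤ) (h : Fin N → ℤ[X]) (hu : ∀ k, p ∣ u k) :
    p ^ (N * (N - 1) / 2) ∣ (Matrix.of fun k e => (h e).eval (u k)).det := by
  set W : ℤ[X] := ∏ k, (X - C (u k)) with hW
  have hmon : W.Monic := monic_prod_of_monic _ _ (fun k _ => monic_X_sub_C _)
  have hdeg : W.natDegree = N := by
    rw [hW, natDegree_prod_of_monic _ _ (fun k _ => monic_X_sub_C _)]
    simp only [natDegree_X_sub_C]; simp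
  have hroot : ∀ k, W.eval (u k) = 0 := by
    intro k
    rw [hW, eval_prod]
    exact Finset.prod_eq_zero (Finset.mem_univ k) (by simp)
  have hmat : (Matrix.of fun k e => (h e).eval (u k)) =
      Matrix.vandermonde u * Matrix.of fun (j e : Fin N) => (h e %ₘ W).coeff j := by
    ext k e
    simp only [Matrix.of_apply, Matrix.mul_apply, Matrix.vandermonde_apply]
    have hN : 0 < N := by have := k.2; omega
    have h1 : (h e).eval (u k) = (h e %ₘ W).eval (u k) := by
      conv_lhs => rw [← modByMonic_add_div (h e) W]
      simp [hroot]
    have h2 : (h e %ₘ W).natDegree < N := by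
      rw [← hdeg]
      apply natDegree_modByMonic_lt _ hmon
      intro h1
      rw [h1] at hdeg
      simp at hdeg
      omega
    rw [h1, eval_eq_sum_range' h2, ← Fin.sum_univ_eq_sum_range
      (fun j => (h e %ₘ W).coeff j * u k ^ j)]
    exact Finset.sum_congr rfl fun _ _ => mul_comm _ _
  rw [hmat, Matrix.det_mul]
  apply Dvd.dvd.mul_right
  rw [Matrix.det_vandermonde]
  have h3 : p ^ (N * (N - 1) / 2) = ∏ i : Fin N, ∏ _j ∈ Finset.Ioi i, p := by
    simp only [Finset.prod_const, Fin.card_Ioi]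
    rw [Finset.prod_pow_eq_pow_sum]
    congr 1
    rw [← Finset.sum_range_id_mul_two N, Nat.mul_div_cancel _ two_pos,
      Fin.sum_univ_eq_sum_range (fun i => N - 1 - i), Finset.sum_range_reflect (fun i => i) N]
  rw [h3]
  exact Finset.prod_dvd_prod_of_dvd _ _ fun i _ => Finset.prod_dvd_prod_of_dvd _ _ fun j _ =>
    dvd_sub (hu _) (hu _)

lemma det_dvd {ι : Type*} [Fintype ι] [DecidableEq ι] (p : ℤ) (u : ι → ℤ)
    (h : ι → ℤ[X]) (hu : ∀ k, p ∣ u k) (A : Matrix ι ι ℤ)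
    (hA : ∀ k e, p ^ (Fintype.card ι * (Fintype.card ι - 1) / 2) ∣ A k e - (h e).eval (u k)) :
    p ^ (Fintype.card ι * (Fintype.card ι - 1) / 2) ∣ A.det := by
  set q := p ^ (Fintype.card ι * (Fintype.card ι - 1) / 2) with hq
  let φ := Ideal.Quotient.mk (Ideal.span {q})
  have hφ : ∀ a, φ a = 0 ↔ q ∣ a := fun a => by
    rw [Ideal.Quotient.eq_zero_iff_mem, Ideal.mem_span_singleton]
  rw [← hφ, RingHom.map_det]
  let ε := Fintype.equivFin ι
  have h1 : φ.mapMatrix A = φ.mapMatrix (Matrix.of fun k e => (h e).eval (u k)) := by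
    ext k e
    simp only [RingHom.mapMatrix_apply, Matrix.map_apply, Matrix.of_apply]
    rw [← sub_eq_zero, ← map_sub, hφ]
    exact hA k e
  rw [h1, ← RingHom.map_det, hφ, ← Matrix.det_submatrix_equiv_self ε.symm]
  exact det_dvd_fin (Fintype.card ι) p (u ∘ ε.symm) (h ∘ ε.symm) (fun k => hu _)

lemma rows {T E : Type*} [Fintype E] [DecidableEq E] (v : T → E → ℚ) :
    (∃ c : E → ℚ, c ≠ 0 ∧ ∀ s, ∑ e, c e * v s e = 0) ∨
      ∃ r : E → T, (Matrix.of fun e e' => v (r e) e').det ≠ 0 := by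
  by_cases hs : Submodule.span ℚ (Set.range v) = ⊤
  · right
    obtain ⟨κ, a, -, hspan, hli⟩ := exists_linearIndependent' ℚ v
    let b := Module.Basis.mk hli (by rw [hspan, hs])
    let σ := (Pi.basisFun ℚ E).indexEquiv b
    refine ⟨a ∘ σ, ?_⟩
    have h1 : LinearIndependent ℚ (fun e => v (a (σ e))) := hli.comp σ σ.injective
    have h2 : IsUnit (Matrix.of fun e e' => v ((a ∘ σ) e) e') :=
      Matrix.linearIndependent_rows_iff_isUnit.1 h1
    exact ((Matrix.isUnit_iff_isUnit_det _).1 h2).ne_zero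
  · left
    obtain ⟨f, hf, hle⟩ := Submodule.exists_le_ker_of_lt_top _ (lt_top_iff_ne_top.2 hs)
    have hfe : ∀ w : E → ℚ, f w = ∑ e, f (Pi.single e 1) * w e := by
      intro w
      conv_lhs => rw [pi_eq_sum_univ' w, map_sum]
      refine Finset.sum_congr rfl fun e _ => ?_
      rw [map_smul, smul_eq_mul, mul_comm]
    refine ⟨fun e => f (Pi.single e 1), ?_, ?_⟩
    · intro h0
      apply hf
      ext w
      have := congrFun h0 w
      simpa using this
    · intro s
      rw [← hfe]
      exact hle (Submodule.subset_span ⟨s, rfl⟩)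

open scoped Matrix.Norms.Elementwise in
/-- Siegel's lemma for a family of rows whose kernel is nontrivial. -/
lemma siegel {T E : Type*} [Fintype E] [DecidableEq E] [Nonempty T] (v : T → E → ℤ) (B : ℝ)
    (hB1 : 1 ≤ B) (hB : ∀ s e, |(v s e : ℝ)| ≤ B)
    (c : E → ℚ) (hc : c ≠ 0) (hcv : ∀ s, ∑ e, c e * v s e = 0) :
    ∃ x : E → ℤ, x ≠ 0 ∧ (∀ s, ∑ e, x e * v s e = 0) ∧
      ∀ e, |(x e : ℝ)| ≤ (Fintype.card E * B) ^ (Fintype.card E) := by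
  classical
  let vq : T → E → ℚ := fun s e => v s e
  have hE : 1 ≤ Fintype.card E := by
    rw [Nat.succ_le_iff, Fintype.card_pos_iff]
    by_contra hemp
    rw [not_nonempty_iff] at hemp
    exact hc (Subsingleton.elim _ _)
  have hEB : (1 : ℝ) ≤ Fintype.card E * B := by
    have : (1 : ℝ) ≤ Fintype.card E := by exact_mod_cast hE
    nlinarith
  obtain ⟨κ, a, ha, hspan, hli⟩ := exists_linearIndependent' ℚ vq
  have : Finite κ := hli.finite
  have := Fintype.ofFinite κ
  -- the kernel functional
  let g : (E → ℚ) →ₗ[ℚ] ℚ := Fintype.linearCombination ℚ c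
  have hg : ∀ w, g w = ∑ e, w e * c e := fun w => by
    simp [g, Fintype.linearCombination_apply]
  have hg0 : g ≠ 0 := by
    intro h0
    apply hc
    ext e
    have := LinearMap.congr_fun h0 (Pi.single e 1)
    rw [hg] at this
    simpa [Pi.single_apply] using this
  have hcard : Fintype.card κ < Fintype.card E := by
    have h1 : Fintype.card κ ≤ Fintype.card E := by
      simpa using hli.fintype_card_le_finrank
    refine lt_of_le_of_ne h1 fun heq => ?_
    have htop := hli.span_eq_top_of_card_eq_finrank' (by simpa using heq)
    rw [hspan] at htop
    have hle : Submodule.span ℚ (Set.range vq) ≤ LinearMap.ker g := by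
      rw [Submodule.span_le]
      rintro _ ⟨s, rfl⟩
      rw [SetLike.mem_coe, LinearMap.mem_ker, hg, ← hcv s]
      exact Finset.sum_congr rfl fun e _ => mul_comm _ _
    rw [htop, top_le_iff, LinearMap.ker_eq_top] at hle
    exact hg0 hle
  -- from a solution on the chosen rows to all rows
  have hall : ∀ x : E → ℤ, (∀ k : κ, ∑ e, x e * v (a k) e = 0) → ∀ s, ∑ e, x e * v s e = 0 := by
    intro x hx s
    let gx : (E → ℚ) →ₗ[ℚ] ℚ := Fintype.linearCombination ℚ (fun e => (x e : ℚ))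
    have hgx : ∀ w, gx w = ∑ e, w e * x e := fun w => by
      simp [gx, Fintype.linearCombination_apply]
    have hle : Submodule.span ℚ (Set.range (vq ∘ a)) ≤ LinearMap.ker gx := by
      rw [Submodule.span_le]
      rintro _ ⟨k, rfl⟩
      rw [SetLike.mem_coe, LinearMap.mem_ker, hgx]
      have := hx k
      have h2 : ((∑ e, x e * v (a k) e : ℤ) : ℚ) = 0 := by rw [this]; simp
      push_cast at h2
      rw [← h2]
      exact Finset.sum_congr rfl fun e _ => mul_comm _ _
    rw [hspan] at hle
    have h3 := hle (Submodule.subset_span ⟨s, rfl⟩)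
    rw [LinearMap.mem_ker, hgx] at h3
    have h4 : ((∑ e, x e * v s e : ℤ) : ℚ) = 0 := by
      push_cast
      rw [← h3]
      exact Finset.sum_congr rfl fun e _ => mul_comm _ _
    exact_mod_cast h4
  rcases Nat.eq_zero_or_pos (Fintype.card κ) with h0 | hpos
  · have : IsEmpty κ := Fintype.card_eq_zero_iff.1 h0
    refine ⟨fun _ => 1, ?_, hall _ (fun k => isEmptyElim k), fun e => ?_⟩
    · intro h
      obtain ⟨e⟩ : Nonempty E := Fintype.card_pos_iff.1 (by omega)
      simpa using congrFun h e
    · simpa using one_le_pow₀ hEB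
  · let A : Matrix κ E ℤ := Matrix.of fun k e => v (a k) e
    obtain ⟨x, hx0, hAx, hxn⟩ := Int.Matrix.exists_ne_zero_int_vec_norm_le A hcard hpos
    refine ⟨x, hx0, hall x fun k => ?_, fun e => ?_⟩
    · have := congrFun hAx k
      simp only [Matrix.mulVec, dotProduct, A, Matrix.of_apply, Pi.zero_apply] at this
      rw [← this]
      exact Finset.sum_congr rfl fun e _ => mul_comm _ _
    · have h1 : |(x e : ℝ)| ≤ ‖x‖ := by
        have := norm_le_pi_norm x e
        rwa [Int.norm_eq_abs] at this
      refine h1.trans (hxn.trans ?_)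
      have hAn : ‖A‖ ≤ B := by
        rw [Matrix.norm_le_iff (by linarith)]
        intro k e
        rw [Int.norm_eq_abs]
        exact hB _ _
      have h2 : (Fintype.card E : ℝ) * max 1 ‖A‖ ≤ Fintype.card E * B := by
        gcongr
        exact max_le hB1 hAn
      have hlt : (Fintype.card κ : ℝ) + 1 ≤ Fintype.card E := by exact_mod_cast hcard
      calc ((Fintype.card E : ℝ) * max 1 ‖A‖) ^ ((Fintype.card κ : ℝ) / (Fintype.card E - Fintype.card κ))
          ≤ (Fintype.card E * B) ^ ((Fintype.card κ : ℝ) / (Fintype.card E - Fintype.card κ)) := by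
            apply Real.rpow_le_rpow (by positivity) h2
            apply div_nonneg (by positivity); linarith
        _ ≤ (Fintype.card E * B) ^ (Fintype.card E : ℝ) := by
            apply Real.rpow_le_rpow_of_exponent_le hEB
            rw [div_le_iff₀ (by linarith)]
            nlinarith [Nat.cast_nonneg (α := ℝ) (Fintype.card κ)]
        _ = _ := by rw [Real.rpow_natCast]

lemma primes (K n : ℕ) (hn : n ≠ 0) : ∃ s : Finset ℕ, s.card = K ∧
    ∀ p ∈ s, p.Prime ∧ n < p ∧ p ≤ 2 ^ K * n := by
  classical
  induction K with
  | zero => exact ⟨∅, by simp⟩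
  | succ K ih =>
    obtain ⟨s, hs, hp⟩ := ih
    obtain ⟨q, hq, h1, h2⟩ := Nat.exists_prime_lt_and_le_two_mul (2 ^ K * n) (by positivity)
    have hpow : 1 ≤ 2 ^ K := Nat.one_le_two_pow
    refine ⟨insert q s, ?_, ?_⟩
    · rw [Finset.card_insert_of_notMem, hs]
      intro hqs
      have := (hp q hqs).2.2
      omega
    · intro p hps
      rw [Finset.mem_insert] at hps
      rw [pow_succ]
      rcases hps with rfl | hps
      · exact ⟨hq, by nlinarith, by nlinarith⟩
      · have := hp p hps
        exact ⟨this.1, this.2.1, by nlinarith⟩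

end BP

namespace BP

open Polynomial Polynomial.Bivariate

/-- The polynomial with prescribed coefficients on a finite set of exponents. -/
noncomputable def mkP {R : Type*} [CommRing R] (E : Finset (ℕ × ℕ)) (c : E → R) : R[X][Y] :=
  ∑ e : E, monomial e.1.1 (monomial e.1.2 (c e))

lemma mkP_coeff {R : Type*} [CommRing R] (E : Finset (ℕ × ℕ)) (c : E → R) (i j : ℕ) :
    ((mkP E c).coeff i).coeff j = if h : (i, j) ∈ E then c ⟨(i, j), h⟩ else 0 := by
  classical
  unfold mkP
  rw [finsetSum_coeff, finsetSum_coeff]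
  split_ifs with h
  · rw [Finset.sum_eq_single ⟨(i, j), h⟩]
    · simp
    · rintro ⟨⟨i', j'⟩, h'⟩ - hne
      rw [coeff_monomial]
      split_ifs with hi
      · simp only at hi
        subst hi
        rw [coeff_monomial, if_neg]
        rintro rfl
        exact hne rfl
      · simp
    · simp
  · apply Finset.sum_eq_zero
    rintro ⟨⟨i', j'⟩, h'⟩ -
    rw [coeff_monomial]
    split_ifs with hi
    · simp only at hi
      subst hi
      rw [coeff_monomial, if_neg]
      rintro rfl
      exact h h'
    · simp

lemma mkP_evalEval {R : Type*} [CommRing R] (E : Finset (ℕ × ℕ)) (c : E → R) (t z : R) :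
    (mkP E c).evalEval t z = ∑ e : E, c e * (z ^ e.1.1 * t ^ e.1.2) := by
  unfold mkP
  rw [evalEval_finsetSum]
  refine Finset.sum_congr rfl fun e _ => ?_
  unfold evalEval
  simp [eval_monomial]
  ring

lemma mkP_ne_zero {R : Type*} [CommRing R] (E : Finset (ℕ × ℕ)) (c : E → R) (hc : c ≠ 0) :
    mkP E c ≠ 0 := by
  intro h0
  apply hc
  ext ⟨⟨i, j⟩, h⟩
  have := mkP_coeff E c i j
  rw [h0, dif_pos h] at this
  simpa using this.symm

lemma natDegree_le_of_coeff {R : Type*} [CommRing R] (P : R[X][Y]) (D : ℕ)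
    (h : ∀ i j, D < i → (P.coeff i).coeff j = 0) : P.natDegree ≤ D := by
  rw [natDegree_le_iff_coeff_eq_zero]
  intro i hi
  ext j
  rw [h i j hi]; simp

lemma mkP_natDegree {R : Type*} [CommRing R] (E : Finset (ℕ × ℕ)) (c : E → R) (D : ℕ)
    (hD : ∀ e ∈ E, e.1 ≤ D) : (mkP E c).natDegree ≤ D := by
  apply natDegree_le_of_coeff
  intro i j hi
  rw [mkP_coeff, dif_neg]
  intro h
  have := hD _ h
  simp only at this
  omega

lemma mkP_coeff_natDegree {R : Type*} [CommRing R] (E : Finset (ℕ × ℕ)) (c : E → R) (D : ℕ)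
    (hD : ∀ e ∈ E, e.2 ≤ D) (i : ℕ) : ((mkP E c).coeff i).natDegree ≤ D := by
  rw [natDegree_le_iff_coeff_eq_zero]
  intro j hj
  rw [mkP_coeff, dif_neg]
  intro h
  have := hD _ h
  simp only at this
  omega

/-- base change to the rationals -/
noncomputable def toQ (F : ℤ[X][Y]) : ℚ[X][Y] := F.map (mapRingHom (Int.castRingHom ℚ))

lemma toQ_coeff (F : ℤ[X][Y]) (i j : ℕ) :
    ((toQ F).coeff i).coeff j = ((F.coeff i).coeff j : ℚ) := by
  simp [toQ, coeff_map]

lemma toQ_evalEval (F : ℤ[X][Y]) (t z : ℤ) :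
    (toQ F).evalEval (t : ℚ) (z : ℚ) = ((F.evalEval t z : ℤ) : ℚ) := by
  have := map_mapRingHom_evalEval (Int.castRingHom ℚ) F t z
  simpa [toQ] using this

lemma toQ_natDegree (F : ℤ[X][Y]) : (toQ F).natDegree = F.natDegree :=
  natDegree_map_eq_of_injective (map_injective _ (Int.cast_injective)) _

lemma toQ_coeff_natDegree (F : ℤ[X][Y]) (i : ℕ) :
    ((toQ F).coeff i).natDegree = (F.coeff i).natDegree := by
  rw [toQ, coeff_map, coe_mapRingHom]
  exact natDegree_map_eq_of_injective (Int.cast_injective) _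

lemma det_abs_le {ι : Type*} [Fintype ι] [DecidableEq ι] (A : Matrix ι ι ℤ) (B : ι → ℝ)
    (hA : ∀ k e, |(A k e : ℝ)| ≤ B e) :
    |(A.det : ℝ)| ≤ (Fintype.card ι).factorial * ∏ e, B e := by
  rw [Matrix.det_apply']
  push_cast
  refine (Finset.abs_sum_le_sum_abs _ _).trans ?_
  refine (Finset.sum_le_card_nsmul _ _ (∏ e, B e) ?_).trans ?_
  · intro σ _
    rw [abs_mul, Finset.abs_prod]
    have h1 : |((Equiv.Perm.sign σ : ℤ) : ℝ)| = 1 := by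
      rcases Int.units_eq_one_or (Equiv.Perm.sign σ) with h | h <;> rw [h] <;> simp
    rw [h1, one_mul]
    exact Finset.prod_le_prod (fun _ _ => abs_nonneg _) fun e _ => hA _ _
  · rw [nsmul_eq_mul, Finset.card_univ, Fintype.card_perm]

/-- Points in one nonsingular residue class lie on few curves. -/
lemma fiber (α H : ℝ) (hH : 2 ≤ H) (F : ℤ[X][Y]) (hF : Irreducible (toQ F))
    (hFd : 0 < F.natDegree) (a b : ℕ) (hlead : IsLead α (toQ F) a b) (E : Finset (ℕ × ℕ))
    (hE : ∀ e ∈ E, e.1 < a ∨ e.2 < b) (D : ℕ) (hD : ∀ e ∈ E, e.1 ≤ D ∧ e.2 ≤ D)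
    (hF1 : F.natDegree ≤ D) (hF2 : ∀ i, (F.coeff i).natDegree ≤ D)
    (p : ℕ) (hp : p.Prime)
    (hbig : (E.card.factorial : ℝ) * ∏ e ∈ E, ((H ^ α) ^ e.1 * H ^ e.2) <
      (p : ℝ) ^ (E.card * (E.card - 1) / 2))
    (z1 t1 : ℤ) (hns : ¬ (p : ℤ) ∣ (derivative F).evalEval t1 z1)
    (T : Finset (ℤ × ℤ)) (hT0 : ∀ q ∈ T, F.evalEval q.2 q.1 = 0)
    (hTb : ∀ q ∈ T, |(q.1 : ℝ)| ≤ H ^ α ∧ |(q.2 : ℝ)| ≤ H)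
    (hTc : ∀ q ∈ T, (p : ℤ) ∣ q.1 - z1 ∧ (p : ℤ) ∣ q.2 - t1) :
    T.card ≤ D * (2 * D * D) := by
  classical
  have hHpos : 0 < H := by linarith
  have hpI : Prime (p : ℤ) := Nat.prime_iff_prime_int.1 hp
  obtain ⟨c', hc'⟩ : ∃ c' : ℤ, (p : ℤ) ∣ 1 - c' * (derivative F).evalEval t1 z1 := by
    have hcop : IsCoprime (p : ℤ) ((derivative F).evalEval t1 z1) :=
      (hpI.irreducible.coprime_iff_not_dvd).2 hns
    obtain ⟨x, y, hxy⟩ := hcop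
    exact ⟨y, x, by linear_combination -hxy⟩
  set M := E.card * (E.card - 1) / 2 with hM
  obtain ⟨f, hf⟩ := hensel F p z1 t1 c' hc' M
  let v : T → E → ℚ := fun q e => (q.1.1 : ℚ) ^ e.1.1 * (q.1.2 : ℚ) ^ e.1.2
  rcases rows v with ⟨c, hc0, hc⟩ | ⟨r, hr⟩
  · refine bezout D (toQ F) (mkP E c) hF (by rwa [toQ_natDegree]) ?_ (by rwa [toQ_natDegree])
      (fun i => by rw [toQ_coeff_natDegree]; exact hF2 i)
      (mkP_natDegree _ _ _ fun e he => (hD e he).1)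
      (mkP_coeff_natDegree _ _ _ fun e he => (hD e he).2) T ?_
    · apply not_dvd_of_isLead hlead (mkP_ne_zero E c hc0)
      intro i j hi hj
      rw [mkP_coeff, dif_neg]
      intro h
      have := hE _ h
      simp only at this
      omega
    · intro q hq
      refine ⟨by rw [toQ_evalEval, hT0 q hq]; simp, ?_⟩
      rw [mkP_evalEval]
      exact hc ⟨q, hq⟩
  · exfalso
    apply hr
    let A : Matrix E E ℤ := Matrix.of fun k e => (r k).1.1 ^ e.1.1 * (r k).1.2 ^ e.1.2
    have hAdet : (Matrix.of fun e e' => v (r e) e').det = (A.det : ℚ) := by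
      change _ = Int.castRingHom ℚ A.det
      rw [RingHom.map_det]
      congr 1
      ext k e
      simp [A, v]
    rw [hAdet]
    have hcard : Fintype.card E = E.card := Fintype.card_coe E
    have hdvd : (p : ℤ) ^ M ∣ A.det := by
      have := det_dvd (p : ℤ) (fun k : E => (r k).1.2 - t1)
        (fun e : E => f ^ e.1.1 * (X + C t1) ^ e.1.2) (fun k => (hTc _ (r k).2).2) A ?_
      · rwa [hcard] at this
      · intro k e
        rw [hcard]
        simp only [A, Matrix.of_apply, eval_mul, eval_pow, eval_add, eval_X, eval_C,
          sub_add_cancel, ← sub_mul]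
        apply Dvd.dvd.mul_right
        have h1 := hf _ _ (hTc _ (r k).2).1 (hTc _ (r k).2).2 (hT0 _ (r k).2)
        exact ((pow_dvd_pow _ (Nat.le_succ M)).trans h1).trans (sub_dvd_pow_sub_pow _ _ _)
    have hle := det_abs_le A (fun e => (H ^ α) ^ e.1.1 * H ^ e.1.2) (fun k e => by
      simp only [A, Matrix.of_apply]
      push_cast
      rw [abs_mul, abs_pow, abs_pow]
      have := hTb _ (r k).2
      gcongr
      · exact this.1
      · exact this.2)
    rw [hcard, Finset.prod_coe_sort E (fun e => (H ^ α) ^ e.1 * H ^ e.2)] at hle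
    have hlt : |(A.det : ℝ)| < (p : ℝ) ^ M := hle.trans_lt hbig
    have hlt' : |A.det| < (p : ℤ) ^ M := by exact_mod_cast hlt
    have := Int.eq_zero_of_abs_lt_dvd hdvd hlt'
    rw [this]; simp

/-- Number of nonsingular points on the reduction. -/
lemma image_card (F : ℤ[X][Y]) (d : ℕ) (hFd : F.natDegree ≤ d) (p : ℕ) [Fact p.Prime]
    (T : Finset (ℤ × ℤ)) (hT0 : ∀ q ∈ T, F.evalEval q.2 q.1 = 0)
    (hns : ∀ q ∈ T, ¬ (p : ℤ) ∣ (derivative F).evalEval q.2 q.1) :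
    (T.image fun q => ((q.1 : ZMod p), (q.2 : ZMod p))).card ≤ d * p := by
  classical
  set U := T.image fun q => ((q.1 : ZMod p), (q.2 : ZMod p)) with hU
  set Fp : (ZMod p)[X][Y] := F.map (mapRingHom (Int.castRingHom (ZMod p))) with hFp
  have hU0 : ∀ x ∈ U, Fp.evalEval x.2 x.1 = 0 ∧ (derivative Fp).evalEval x.2 x.1 ≠ 0 := by
    intro x hx
    rw [hU, Finset.mem_image] at hx
    obtain ⟨q, hq, rfl⟩ := hx
    have h1 := map_mapRingHom_evalEval (Int.castRingHom (ZMod p)) F q.2 q.1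
    have h2 := map_mapRingHom_evalEval (Int.castRingHom (ZMod p)) (derivative F) q.2 q.1
    rw [hT0 q hq, map_zero] at h1
    rw [← derivative_map] at h2
    refine ⟨by simpa using h1, ?_⟩
    simp only [eq_intCast] at h2
    simp only [hFp]
    rw [h2, Ne, ZMod.intCast_zmod_eq_zero_iff_dvd]
    exact hns q hq
  have h1 : (U.image Prod.snd).card ≤ p := by
    have := Finset.card_le_univ (U.image Prod.snd)
    rwa [ZMod.card] at this
  refine (Finset.card_le_mul_card_image (f := Prod.snd) U d ?_).trans (Nat.mul_le_mul_left _ h1)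
  intro t ht
  rw [Finset.mem_image] at ht
  obtain ⟨x0, hx0, rfl⟩ := ht
  have hne : Fp.map (evalRingHom x0.2) ≠ 0 := by
    intro h0
    apply (hU0 x0 hx0).2
    rw [← map_evalRingHom_eval, ← derivative_map, h0]
    simp
  have hsub : (U.filter (fun x => x.2 = x0.2)).image Prod.fst ⊆
      (Fp.map (evalRingHom x0.2)).roots.toFinset := by
    intro z hz
    simp only [Finset.mem_image, Finset.mem_filter] at hz
    obtain ⟨x, ⟨hx, hx2⟩, rfl⟩ := hz
    rw [Multiset.mem_toFinset, mem_roots hne, IsRoot, map_evalRingHom_eval, ← hx2]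
    exact (hU0 x hx).1
  have hinj : ((U.filter (fun x => x.2 = x0.2)).image Prod.fst).card =
      (U.filter (fun x => x.2 = x0.2)).card := by
    apply Finset.card_image_of_injOn
    intro x hx y hy hxy
    simp only [Finset.coe_filter, Set.mem_ofPred_eq] at hx hy
    exact Prod.ext hxy (hx.2.trans hy.2.symm)
  rw [← hinj]
  exact (Finset.card_le_card hsub).trans ((Multiset.toFinset_card_le _).trans
      ((card_roots' _).trans (natDegree_map_le.trans (natDegree_map_le.trans hFd))))

/-- The count, given a suitable set of primes. -/
lemma count (α H : ℝ) (hH : 2 ≤ H) (F : ℤ[X][Y]) (hF : Irreducible (toQ F))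
    (hFd : 0 < F.natDegree) (a b : ℕ) (hlead : IsLead α (toQ F) a b) (E : Finset (ℕ × ℕ))
    (hE : ∀ e ∈ E, e.1 < a ∨ e.2 < b) (D : ℕ) (hD : ∀ e ∈ E, e.1 ≤ D ∧ e.2 ≤ D)
    (hF1 : F.natDegree ≤ D) (hF2 : ∀ i, (F.coeff i).natDegree ≤ D)
    (s : Finset ℕ) (n Q : ℕ) (hs : ∀ p ∈ s, p.Prime ∧ n < p ∧ p ≤ Q)
    (hbig : (E.card.factorial : ℝ) * ∏ e ∈ E, ((H ^ α) ^ e.1 * H ^ e.2) <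
      (n : ℝ) ^ (E.card * (E.card - 1) / 2))
    (V : ℝ) (hV : V < (n : ℝ) ^ s.card)
    (T : Finset (ℤ × ℤ)) (hT0 : ∀ q ∈ T, F.evalEval q.2 q.1 = 0)
    (hTb : ∀ q ∈ T, |(q.1 : ℝ)| ≤ H ^ α ∧ |(q.2 : ℝ)| ≤ H)
    (hTV : ∀ q ∈ T, |(((derivative F).evalEval q.2 q.1 : ℤ) : ℝ)| ≤ V) :
    T.card ≤ D * (2 * D * D) + s.card * (D * (2 * D * D) * (D * Q)) := by
  classical
  set B := D * (2 * D * D) with hB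
  let T0 := T.filter fun q => (derivative F).evalEval q.2 q.1 = 0
  let Tp : ℕ → Finset (ℤ × ℤ) := fun p =>
    T.filter fun q => ¬ (p : ℤ) ∣ (derivative F).evalEval q.2 q.1
  have hcover : T ⊆ T0 ∪ s.biUnion Tp := by
    intro q hq
    rw [Finset.mem_union]
    by_cases h0 : (derivative F).evalEval q.2 q.1 = 0
    · left; exact Finset.mem_filter.2 ⟨hq, h0⟩
    · right
      rw [Finset.mem_biUnion]
      by_contra hcon
      push Not at hcon
      have hdv : ∀ p ∈ s, (p : ℤ) ∣ (derivative F).evalEval q.2 q.1 := by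
        intro p hps
        by_contra hc
        exact hcon p hps (Finset.mem_filter.2 ⟨hq, hc⟩)
      have hprod : (∏ p ∈ s, (p : ℤ)) ∣ (derivative F).evalEval q.2 q.1 := by
        apply Finset.prod_dvd_of_coprime _ hdv
        intro p hps p' hps' hne
        exact Nat.isCoprime_iff_coprime.2
          ((Nat.coprime_primes (hs p hps).1 (hs p' hps').1).2 hne)
      have hle := Int.le_of_dvd (abs_pos.2 h0) ((dvd_abs _ _).2 hprod)
      have hle2 : n ^ s.card ≤ ∏ p ∈ s, p := by
        exact Finset.pow_card_le_prod _ _ _ fun p hps => (hs p hps).2.1.le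
      have hle3 : ((n ^ s.card : ℕ) : ℤ) ≤ |(derivative F).evalEval q.2 q.1| := by
        refine le_trans ?_ hle
        rw [← Nat.cast_prod]
        exact_mod_cast hle2
      have hle4 : (n : ℝ) ^ s.card ≤ |(((derivative F).evalEval q.2 q.1 : ℤ) : ℝ)| := by
        exact_mod_cast hle3
      linarith [hTV q hq]
  have hT0c : T0.card ≤ B := by
    refine bezout D (toQ F) (derivative (toQ F)) hF (by rwa [toQ_natDegree]) ?_
      (by rwa [toQ_natDegree]) (fun i => by rw [toQ_coeff_natDegree]; exact hF2 i) ?_ ?_ T0 ?_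
    · intro hdvd
      have h1 : derivative (toQ F) ≠ 0 := by
        intro h0
        have := derivative_eq_zero.1 h0
        rw [toQ_natDegree] at this
        omega
      have h2 := natDegree_le_of_dvd hdvd h1
      have h3 := natDegree_derivative_lt (p := toQ F) (by rw [toQ_natDegree]; omega)
      omega
    · refine (natDegree_derivative_le _).trans ?_
      rw [toQ_natDegree]; omega
    · intro i
      rw [coeff_derivative]
      refine natDegree_mul_le.trans ?_
      rw [toQ_coeff_natDegree]
      have h5 : ((i : ℚ[X]) + 1).natDegree = 0 := by
        have : ((i : ℚ[X]) + 1) = ((i + 1 : ℕ) : ℚ[X]) := by push_cast; rfl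
        rw [this, natDegree_natCast]
      rw [h5]
      exact hF2 _
    · intro q hq
      have hq' := Finset.mem_filter.1 hq
      refine ⟨by rw [toQ_evalEval, hT0 q hq'.1]; simp, ?_⟩
      have : derivative (toQ F) = toQ (derivative F) := by simp [toQ, derivative_map]
      rw [this, toQ_evalEval, hq'.2]; simp
  have hTp : ∀ p ∈ s, (Tp p).card ≤ B * (D * Q) := by
    intro p hps
    obtain ⟨hpp, hnp, hpQ⟩ := hs p hps
    have : Fact p.Prime := ⟨hpp⟩
    have hsubT : ∀ q ∈ Tp p, q ∈ T := fun q hq => (Finset.mem_filter.1 hq).1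
    have himg := image_card F D hF1 p (Tp p) (fun q hq => hT0 q (hsubT q hq))
      (fun q hq => (Finset.mem_filter.1 hq).2)
    refine (Finset.card_le_mul_card_image (f := fun q : ℤ × ℤ => ((q.1 : ZMod p), (q.2 : ZMod p)))
      (Tp p) B ?_).trans (Nat.mul_le_mul_left _ (himg.trans (Nat.mul_le_mul_left _ hpQ)))
    intro x hx
    rw [Finset.mem_image] at hx
    obtain ⟨q0, hq0, rfl⟩ := hx
    refine fiber α H hH F hF hFd a b hlead E hE D hD hF1 hF2 p hpp ?_ q0.1 q0.2
      (Finset.mem_filter.1 hq0).2 _ ?_ ?_ ?_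
    · refine hbig.trans_le ?_
      gcongr
    · intro q hq
      exact hT0 q (hsubT q (Finset.mem_filter.1 hq).1)
    · intro q hq
      exact hTb q (hsubT q (Finset.mem_filter.1 hq).1)
    · intro q hq
      have := (Finset.mem_filter.1 hq).2
      simp only [Prod.mk.injEq] at this
      constructor
      · exact (ZMod.intCast_eq_intCast_iff_dvd_sub _ _ _).1 this.1.symm
      · exact (ZMod.intCast_eq_intCast_iff_dvd_sub _ _ _).1 this.2.symm
  calc T.card ≤ (T0 ∪ s.biUnion Tp).card := Finset.card_le_card hcover
    _ ≤ T0.card + (s.biUnion Tp).card := Finset.card_union_le _ _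
    _ ≤ B + s.card * (B * (D * Q)) :=
      Nat.add_le_add hT0c (Finset.card_biUnion_le_card_mul _ _ _ hTp)

end BP

namespace BP

open Polynomial Polynomial.Bivariate

/-- The L-shaped set of exponents. -/
def Eset (a b K L : ℕ) : Finset (ℕ × ℕ) :=
  Finset.range a ×ˢ Finset.range L ∪ Finset.Ico a (a + K) ×ˢ Finset.range b

lemma Eset_disj (a b K L : ℕ) : Disjoint (Finset.range a ×ˢ Finset.range L)
    (Finset.Ico a (a + K) ×ˢ Finset.range b) := by
  rw [Finset.disjoint_left]
  rintro ⟨i, j⟩ h1 h2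
  simp only [Finset.mem_product, Finset.mem_range, Finset.mem_Ico] at h1 h2
  omega

lemma Eset_card (a b K L : ℕ) : (Eset a b K L).card = a * L + K * b := by
  rw [Eset, Finset.card_union_of_disjoint (Eset_disj a b K L)]
  simp

lemma sum_range_real (n : ℕ) : ∑ j ∈ Finset.range n, (j : ℝ) ≤ (n : ℝ) ^ 2 / 2 := by
  induction n with
  | zero => simp
  | succ n ih => rw [Finset.sum_range_succ]; push_cast; nlinarith

lemma Eset_sum (d a b K L : ℕ) (ha : a ≤ d) (hb : b ≤ d) (α : ℝ) (hα : 1 ≤ α) :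
    ∑ e ∈ Eset a b K L, (α * e.1 + e.2) ≤
      (a * (L : ℝ) ^ 2 + α * b * (K : ℝ) ^ 2) / 2 + (α * d + d) * (a * L + K * b) := by
  rw [Eset, Finset.sum_union (Eset_disj a b K L), Finset.sum_product, Finset.sum_product]
  have hd' : (0 : ℝ) ≤ d := by positivity
  have h1 : ∑ i ∈ Finset.range a, ∑ j ∈ Finset.range L, (α * (i : ℝ) + (j : ℝ)) ≤
      a * (L * (α * d) + (L : ℝ) ^ 2 / 2) := by
    refine (Finset.sum_le_card_nsmul _ _ (L * (α * d) + (L : ℝ) ^ 2 / 2) ?_).trans ?_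
    · intro i hi
      rw [Finset.sum_add_distrib]
      refine add_le_add ?_ (sum_range_real L)
      simp only [Finset.sum_const, Finset.card_range, nsmul_eq_mul]
      have : (i : ℝ) ≤ d := by
        rw [Finset.mem_range] at hi
        exact_mod_cast (by omega : i ≤ d)
      gcongr
    · simp only [Finset.card_range, nsmul_eq_mul]; exact le_rfl
  have h2 : ∑ i ∈ Finset.Ico a (a + K), ∑ j ∈ Finset.range b, (α * (i : ℝ) + (j : ℝ)) ≤
      b * (K * (α * d + d) + α * ((K : ℝ) ^ 2 / 2)) := by
    rw [Finset.sum_comm]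
    refine (Finset.sum_le_card_nsmul _ _ (K * (α * d + d) + α * ((K : ℝ) ^ 2 / 2)) ?_).trans ?_
    · intro j hj
      rw [Finset.sum_Ico_eq_sum_range]
      simp only [add_tsub_cancel_left]
      have h3 : ∀ i ∈ Finset.range K, α * ((a + i : ℕ) : ℝ) + (j : ℝ) ≤ (α * d + d) + α * i := by
        intro i _
        have hj' : (j : ℝ) ≤ d := by
          rw [Finset.mem_range] at hj
          exact_mod_cast (by omega : j ≤ d)
        have ha' : (a : ℝ) ≤ d := by exact_mod_cast ha
        push_cast
        nlinarith
      refine (Finset.sum_le_sum h3).trans ?_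
      rw [Finset.sum_add_distrib, ← Finset.mul_sum]
      have := sum_range_real K
      refine add_le_add (by simp only [Finset.sum_const, Finset.card_range, nsmul_eq_mul]; exact le_rfl) (by gcongr)
    · simp only [Finset.card_range, nsmul_eq_mul]; exact le_rfl
  refine (add_le_add h1 h2).trans ?_
  have h5 : (0 : ℝ) ≤ a * L * d := by positivity
  nlinarith

lemma numerics (d : ℕ) (α ε : ℝ) (hα : 1 ≤ α) (hε : 0 < ε) : ∃ K L : ℕ, ∀ m a b : ℕ, 1 ≤ m →
    a ≤ d → b ≤ d → α * m ≤ α * a + b → 2 ≤ (Eset a b K L).card ∧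
    ∑ e ∈ Eset a b K L, (α * e.1 + e.2) ≤ (1 / (m : ℝ) + ε) *
      (((Eset a b K L).card * ((Eset a b K L).card - 1) / 2 : ℕ) : ℝ) := by
  obtain ⟨K, hK⟩ := exists_nat_ge (max ((d : ℝ) + 2) ((2 * (α * d + d) + (1 + ε) * (d + 1)) / ε))
  have hK1 : (d : ℝ) + 2 ≤ K := (le_max_left _ _).trans hK
  have hK2 : 2 * (α * d + d) + (1 + ε) * (d + 1) ≤ ε * K := by
    have := (le_max_right _ _).trans hK
    rw [div_le_iff₀ hε] at this
    linarith
  refine ⟨K, ⌈α * K⌉₊, ?_⟩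
  set L := ⌈α * (K : ℝ)⌉₊ with hL
  have hLK : α * K ≤ L := Nat.le_ceil _
  have hLK2 : (L : ℝ) < α * K + 1 := Nat.ceil_lt_add_one (by positivity)
  intro m a b hm ha hb hab
  have hm' : (1 : ℝ) ≤ m := by exact_mod_cast hm
  have hb' : (b : ℝ) ≤ d := by exact_mod_cast hb
  have hK0 : (0 : ℝ) ≤ K := by positivity
  have hL0 : (0 : ℝ) ≤ L := by positivity
  have hd0 : (0 : ℝ) ≤ d := by positivity
  have hb0 : (0 : ℝ) ≤ b := by positivity
  have hKL : (K : ℝ) ≤ L := (le_mul_of_one_le_left hK0 hα).trans hLK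
  have hmL : (L : ℝ) ≤ m * L := le_mul_of_one_le_left hL0 hm'
  have hN : (m : ℝ) * L - d ≤ a * L + K * b := by
    -- multiply by α
    have h1 : α * m * L ≤ α * (a * L) + b * L := by
      have := mul_le_mul_of_nonneg_right hab hL0
      linarith
    have h2 : (b : ℝ) * L ≤ α * (K * b) + b := by
      have := mul_le_mul_of_nonneg_left hLK2.le hb0
      linarith
    have h3 : α * (m * L - d) ≤ α * (a * L + K * b) := by
      have h4 : (d : ℝ) ≤ α * d := le_mul_of_one_le_left hd0 hα
      linarith
    exact le_of_mul_le_mul_left h3 (by linarith)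
  have hN2 : (2 : ℝ) ≤ a * L + K * b := by linarith
  rw [Eset_card]
  have hN2' : 2 ≤ a * L + K * b := by exact_mod_cast hN2
  refine ⟨hN2', (Eset_sum d a b K L ha hb α hα).trans ?_⟩
  have hcast : (((a * L + K * b) * ((a * L + K * b) - 1) / 2 : ℕ) : ℝ) =
      ((a * L + K * b : ℝ)) * ((a * L + K * b) - 1) / 2 := by
    rw [Nat.cast_div (Nat.even_mul_pred_self _).two_dvd (by norm_num)]
    push_cast [Nat.cast_sub (show 1 ≤ a * L + K * b by omega)]
    ring
  rw [hcast]
  set N : ℝ := a * L + K * b with hNdef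
  have h4 : α * b * (K : ℝ) ^ 2 ≤ L * (K * b) := by
    have := mul_le_mul_of_nonneg_right hLK (by positivity : (0 : ℝ) ≤ K * b)
    linarith
  have h5 : L + 2 * (α * d + d) ≤ (1 / (m : ℝ) + ε) * (N - 1) := by
    have h6 : (1 / (m : ℝ) + ε) * (m * L - d - 1) ≤ (1 / (m : ℝ) + ε) * (N - 1) := by
      apply mul_le_mul_of_nonneg_left _ (by positivity)
      linarith
    have h7 : (1 / (m : ℝ) + ε) * (m * L - d - 1) =
        L - (1 / (m : ℝ)) * (d + 1) + ε * m * L - ε * (d + 1) := by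
      field_simp
      ring
    have h8 : (1 / (m : ℝ)) * (d + 1) ≤ d + 1 := by
      have : 1 / (m : ℝ) ≤ 1 := by rw [div_le_one (by linarith)]; exact hm'
      exact mul_le_of_le_one_left (by linarith) this
    have h9 : ε * K ≤ ε * m * L := by
      have := mul_le_mul_of_nonneg_left (hKL.trans hmL) hε.le
      linarith
    linarith
  have hN0 : 0 ≤ N := by linarith
  have h10 := mul_le_mul_of_nonneg_left h5 hN0
  have h11 : N * L = a * (L : ℝ) ^ 2 + L * (K * b) := by rw [hNdef]; ring
  linarith

/-- trivial size bound for a value -/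
lemma evalEval_abs_le (P : ℤ[X][Y]) (d : ℕ) (h1 : P.natDegree ≤ d)
    (h2 : ∀ i, (P.coeff i).natDegree ≤ d) (W Z : ℝ) (hZ : 1 ≤ Z)
    (hW : ∀ i j, |((P.coeff i).coeff j : ℝ)| ≤ W) (z t : ℤ) (hz : |(z : ℝ)| ≤ Z)
    (ht : |(t : ℝ)| ≤ Z) :
    |((P.evalEval t z : ℤ) : ℝ)| ≤ ((d : ℝ) + 1) ^ 2 * W * Z ^ (2 * d) := by
  have hexp : P.evalEval t z = ∑ i ∈ Finset.range (d + 1), ∑ j ∈ Finset.range (d + 1),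
      (P.coeff i).coeff j * t ^ j * z ^ i := by
    rw [← map_evalRingHom_eval, eval_eq_sum_range' (n := d + 1)
      (natDegree_map_le.trans_lt (by omega))]
    refine Finset.sum_congr rfl fun i _ => ?_
    rw [coeff_map, coe_evalRingHom, eval_eq_sum_range' (n := d + 1)
      (by have := h2 i; omega), Finset.sum_mul]
  have hW0 : 0 ≤ W := (abs_nonneg _).trans (hW 0 0)
  rw [hexp]
  push_cast
  have hterm : ∀ i ∈ Finset.range (d + 1), ∀ j ∈ Finset.range (d + 1),
      |((P.coeff i).coeff j : ℝ) * t ^ j * z ^ i| ≤ W * Z ^ (2 * d) := by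
    intro i hi j hj
    rw [Finset.mem_range] at hi hj
    rw [abs_mul, abs_mul, abs_pow, abs_pow, two_mul, pow_add, mul_assoc]
    have e1 : |(t : ℝ)| ^ j ≤ Z ^ d :=
      (pow_le_pow_left₀ (abs_nonneg _) ht _).trans (pow_le_pow_right₀ hZ (by omega))
    have e2 : |(z : ℝ)| ^ i ≤ Z ^ d :=
      (pow_le_pow_left₀ (abs_nonneg _) hz _).trans (pow_le_pow_right₀ hZ (by omega))
    have e3 := hW i j
    gcongr
  refine (Finset.abs_sum_le_sum_abs _ _).trans ?_
  refine (Finset.sum_le_card_nsmul _ _ ((d + 1) * (W * Z ^ (2 * d))) ?_).trans ?_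
  · intro i hi
    refine (Finset.abs_sum_le_sum_abs _ _).trans ?_
    refine (Finset.sum_le_card_nsmul _ _ (W * Z ^ (2 * d)) (hterm i hi)).trans ?_
    simp
  · simp
    apply le_of_eq
    ring

lemma natCast_le_rpow (n : ℕ) (H : ℝ) (hH : 2 ≤ H) : (n : ℝ) ≤ H ^ (n : ℝ) := by
  rw [Real.rpow_natCast]
  have h1 : (n : ℝ) ≤ 2 ^ n := by exact_mod_cast (Nat.lt_two_pow_self).le
  exact h1.trans (pow_le_pow_left₀ (by norm_num) hH _)

set_option maxHeartbeats 2000000 in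
/-- Main bound under a polynomial bound on the coefficients. -/
lemma main_bdd (d : ℕ) (α ε A : ℝ) (hα : 1 ≤ α) (hε : 0 < ε) :
    ∃ C : ℝ, 0 ≤ C ∧ ∀ m : ℕ, 1 ≤ m → ∀ F : ℤ[X][Y], F.natDegree ≤ d →
      (∀ i, (F.coeff i).natDegree ≤ d) → Irreducible (toQ F) → (F.coeff m).coeff 0 ≠ 0 →
      ∀ H : ℝ, 2 ≤ H → (∀ i j, |((F.coeff i).coeff j : ℝ)| ≤ H ^ A) →
      ∀ T : Finset (ℤ × ℤ), (∀ q ∈ T, F.evalEval q.2 q.1 = 0) →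
      (∀ q ∈ T, |(q.1 : ℝ)| ≤ H ^ α ∧ |(q.2 : ℝ)| ≤ H) →
      (T.card : ℝ) ≤ C * H ^ (1 / (m : ℝ) + ε) := by
  obtain ⟨K, L, hKL⟩ := numerics d α ε hα hε
  set N0 := d * L + K * d with hN0
  set D := d + K + L with hD
  set A2 : ℝ := 3 * ((d + 1 : ℕ) : ℝ) + A + α * (2 * d : ℕ) with hA2
  set k := ⌈A2 / ε⌉₊ + 1 with hk
  set f : ℝ := N0.factorial + 1 with hf
  have hf1 : 1 ≤ f := by rw [hf]; linarith [Nat.cast_nonneg (α := ℝ) N0.factorial]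
  set B : ℝ := ((D * (2 * D * D) : ℕ) : ℝ) with hB
  refine ⟨B + k * (B * (D * (2 ^ k * (f + 1)))), by positivity, ?_⟩
  intro m hm F hF1 hF2 hF hFm H hH hcoef T hT0 hTb
  have hH0 : 0 < H := by linarith
  have hH1 : 1 ≤ H := by linarith
  obtain ⟨a, b, hlead⟩ := exists_isLead α (toQ F) hF.ne_zero
  have hab : (F.coeff a).coeff b ≠ 0 := by
    have := hlead.1
    rw [toQ_coeff] at this
    exact_mod_cast this
  have hle_nat : ∀ i j, (F.coeff i).coeff j ≠ 0 → i ≤ F.natDegree ∧ j ≤ (F.coeff i).natDegree := by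
    intro i j hij
    exact ⟨le_natDegree_of_ne_zero fun h0 => hij (by simp [h0]), le_natDegree_of_ne_zero hij⟩
  have ha : a ≤ d := (hle_nat a b hab).1.trans hF1
  have hb : b ≤ d := (hle_nat a b hab).2.trans (hF2 a)
  have hFd : 0 < F.natDegree := lt_of_lt_of_le hm (hle_nat m 0 hFm).1
  have hw : α * m ≤ α * a + b := by
    have := hlead.2 m 0 (by rw [toQ_coeff]; exact_mod_cast hFm)
    push_cast at this
    rcases this with h | ⟨h, -⟩ <;> linarith
  obtain ⟨hN2, hsum⟩ := hKL m a b hm ha hb hw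
  set E := Eset a b K L with hE
  have hEcard : E.card ≤ N0 := by
    rw [hE, Eset_card, hN0]
    gcongr
  set x : ℝ := 1 / (m : ℝ) + ε with hx
  have hxε : ε ≤ x := by rw [hx]; linarith [show (0 : ℝ) ≤ 1 / (m : ℝ) by positivity]
  set X' := H ^ x with hX'
  have hX1 : 1 ≤ X' := Real.one_le_rpow hH1 (by linarith)
  set n := ⌈f * X'⌉₊ with hn
  have hnle : f * X' ≤ n := Nat.le_ceil _
  have hnlt : (n : ℝ) < f * X' + 1 := Nat.ceil_lt_add_one (by positivity)
  have hfX : 1 ≤ f * X' := by nlinarith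
  have hn1 : (1 : ℝ) ≤ n := by linarith
  have hn0 : n ≠ 0 := by
    rintro h0
    rw [h0] at hn1
    norm_num at hn1
  obtain ⟨s, hscard, hs⟩ := primes k n hn0
  set M := E.card * (E.card - 1) / 2 with hM
  have hM1 : 1 ≤ M := by
    rw [hM, Nat.le_div_iff_mul_le two_pos]
    have : 1 ≤ E.card - 1 := by omega
    nlinarith
  have hprod : ∏ e ∈ E, ((H ^ α) ^ e.1 * H ^ e.2) = H ^ (∑ e ∈ E, (α * e.1 + e.2)) := by
    rw [Real.rpow_sum_of_pos hH0 (fun e : ℕ × ℕ => α * (e.1 : ℝ) + (e.2 : ℝ))]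
    refine Finset.prod_congr rfl fun e _ => ?_
    rw [Real.rpow_add hH0, Real.rpow_mul hH0.le, Real.rpow_natCast, Real.rpow_natCast]
  have hbig : (E.card.factorial : ℝ) * ∏ e ∈ E, ((H ^ α) ^ e.1 * H ^ e.2) < (n : ℝ) ^ M := by
    rw [hprod]
    have h1 : H ^ (∑ e ∈ E, (α * (e.1 : ℝ) + e.2)) ≤ X' ^ M := by
      rw [hX', ← Real.rpow_natCast, ← Real.rpow_mul hH0.le]
      exact Real.rpow_le_rpow_of_exponent_le hH1 hsum
    have h2 : (E.card.factorial : ℝ) ≤ N0.factorial := by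
      exact_mod_cast Nat.factorial_le hEcard
    have h3 : f ≤ f ^ M := le_self_pow₀ hf1 (by omega)
    have hXM : 0 < X' ^ M := by positivity
    calc (E.card.factorial : ℝ) * H ^ (∑ e ∈ E, (α * (e.1 : ℝ) + e.2))
        ≤ N0.factorial * X' ^ M := by gcongr
      _ < f * X' ^ M := by
          apply mul_lt_mul_of_pos_right _ hXM
          rw [hf]; linarith
      _ ≤ f ^ M * X' ^ M := by gcongr
      _ = (f * X') ^ M := by rw [mul_pow]
      _ ≤ (n : ℝ) ^ M := by gcongr
  have hV : H ^ A2 < (n : ℝ) ^ s.card := by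
    rw [hscard]
    have h1 : X' ≤ n := by nlinarith
    have h2 : X' ^ k ≤ (n : ℝ) ^ k := by gcongr
    refine lt_of_lt_of_le ?_ h2
    rw [hX', ← Real.rpow_natCast, ← Real.rpow_mul hH0.le]
    apply Real.rpow_lt_rpow_of_exponent_lt (by linarith)
    have h3 : A2 / ε ≤ ⌈A2 / ε⌉₊ := Nat.le_ceil _
    rw [div_le_iff₀ hε] at h3
    have h4 : (k : ℝ) = ⌈A2 / ε⌉₊ + 1 := by rw [hk]; push_cast; ring
    have h5 : ε * k ≤ x * k := by gcongr
    nlinarith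
  have hHα : H ≤ H ^ α := by
    conv_lhs => rw [← Real.rpow_one H]
    exact Real.rpow_le_rpow_of_exponent_le hH1 hα
  have hTV : ∀ q ∈ T, |(((derivative F).evalEval q.2 q.1 : ℤ) : ℝ)| ≤ H ^ A2 := by
    intro q hq
    have hd1 : ∀ i : ℕ, ((i : ℤ[X]) + 1) = C ((i : ℤ) + 1) := by intro i; simp
    have h1 := evalEval_abs_le (derivative F) d
      ((natDegree_derivative_le _).trans (by omega))
      (fun i => by
        rw [coeff_derivative, hd1]
        refine natDegree_mul_le.trans ?_
        rw [natDegree_C]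
        exact hF2 _) ((d + 1) * H ^ A) (H ^ α) (hH1.trans hHα)
      (fun i j => by
        rw [coeff_derivative, hd1, coeff_mul_C]
        by_cases h0 : (F.coeff (i + 1)).coeff j = 0
        · rw [h0]; simp; positivity
        · have h1 := (hle_nat _ _ h0).1.trans hF1
          have h2 : ((i : ℝ) + 1) ≤ d + 1 := by exact_mod_cast (by omega : i + 1 ≤ d + 1)
          push_cast
          rw [abs_mul, mul_comm, abs_of_nonneg (by positivity : (0 : ℝ) ≤ (i : ℝ) + 1)]
          have h3 := hcoef (i + 1) j
          gcongr)
      q.1 q.2 (hTb q hq).1 ((hTb q hq).2.trans hHα)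
    refine h1.trans ?_
    have h2 := natCast_le_rpow (d + 1) H hH
    set y := H ^ ((d + 1 : ℕ) : ℝ) with hy
    have h3 : H ^ A2 = y ^ 3 * H ^ A * (H ^ α) ^ (2 * d) := by
      rw [hA2, Real.rpow_add hH0, Real.rpow_add hH0, Real.rpow_mul hH0.le α, Real.rpow_natCast,
        mul_comm (3 : ℝ), Real.rpow_mul hH0.le]
      rw [← hy]
      norm_cast
    rw [h3]
    have h4 : ((d : ℝ) + 1) ^ 2 * (((d : ℝ) + 1) * H ^ A) = ((d + 1 : ℕ) : ℝ) ^ 3 * H ^ A := by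
      push_cast; ring
    rw [h4]
    gcongr
  have hcount := count α H hH F hF hFd a b hlead E
    (by
      intro e he
      simp only [hE, Eset, Finset.mem_union, Finset.mem_product, Finset.mem_range,
        Finset.mem_Ico] at he
      omega) D
    (by
      intro e he
      simp only [hE, Eset, Finset.mem_union, Finset.mem_product, Finset.mem_range,
        Finset.mem_Ico] at he
      omega)
    (by omega) (fun i => (hF2 i).trans (by omega)) s n (2 ^ k * n) hs hbig (H ^ A2) hV T hT0 hTb hTV
  have hcount' : (T.card : ℝ) ≤ B + k * (B * (D * (2 ^ k * n))) := by
    rw [hscard] at hcount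
    rw [hB]
    exact_mod_cast hcount
  refine hcount'.trans ?_
  have hnX : (n : ℝ) ≤ (f + 1) * X' := by nlinarith
  have hBX : B ≤ B * X' := le_mul_of_one_le_right (by positivity) hX1
  calc B + k * (B * (D * (2 ^ k * n))) ≤ B * X' + k * (B * (D * (2 ^ k * ((f + 1) * X')))) := by
        gcongr
    _ = (B + k * (B * (D * (2 ^ k * (f + 1))))) * X' := by ring

end BP

namespace BP

open Polynomial Polynomial.Bivariate

set_option maxHeartbeats 1000000 in
/-- The bound for finite sets of zeros, without any bound on the coefficients. -/
lemma main_fin (d : ℕ) (α ε : ℝ) (hα : 1 ≤ α) (hε : 0 < ε) :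
    ∃ C : ℝ, 0 ≤ C ∧ ∀ m : ℕ, 1 ≤ m → ∀ F : ℤ[X][Y], F.natDegree ≤ d →
      (∀ i, (F.coeff i).natDegree ≤ d) → Irreducible (toQ F) → (F.coeff m).coeff 0 ≠ 0 →
      ∀ H : ℝ, 2 ≤ H →
      ∀ T : Finset (ℤ × ℤ), (∀ q ∈ T, F.evalEval q.2 q.1 = 0) →
      (∀ q ∈ T, |(q.1 : ℝ)| ≤ H ^ α ∧ |(q.2 : ℝ)| ≤ H) →
      (T.card : ℝ) ≤ C * H ^ (1 / (m : ℝ) + ε) := by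
  classical
  set g : ℕ := (d + 1) * (d + 1) with hg
  obtain ⟨C1, hC1, hmain⟩ := main_bdd d α ε (((g : ℕ) + α * (2 * d : ℕ)) * (g : ℕ)) hα hε
  refine ⟨C1 + ((d * (2 * d * d) : ℕ) : ℝ), by positivity, ?_⟩
  intro m hm F hF1 hF2 hF hFm H hH T hT0 hTb
  have hH0 : 0 < H := by linarith
  have hH1 : 1 ≤ H := by linarith
  have hX1 : 1 ≤ H ^ (1 / (m : ℝ) + ε) := Real.one_le_rpow hH1 (by positivity)
  have hHα : H ≤ H ^ α := by
    conv_lhs => rw [← Real.rpow_one H]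
    exact Real.rpow_le_rpow_of_exponent_le hH1 hα
  have hHα1 : 1 ≤ H ^ α := hH1.trans hHα
  have hle_nat : ∀ i j, (F.coeff i).coeff j ≠ 0 → i ≤ F.natDegree ∧ j ≤ (F.coeff i).natDegree := by
    intro i j hij
    exact ⟨le_natDegree_of_ne_zero fun h0 => hij (by simp [h0]), le_natDegree_of_ne_zero hij⟩
  have hFd : 0 < F.natDegree := lt_of_lt_of_le hm (hle_nat m 0 hFm).1
  rcases T.eq_empty_or_nonempty with rfl | hTne
  · simp only [Finset.card_empty, Nat.cast_zero]
    positivity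
  set E : Finset (ℕ × ℕ) := (Finset.range (d + 1) ×ˢ Finset.range (d + 1)).filter
    (fun e => (F.coeff e.1).coeff e.2 ≠ 0) with hE
  have hEmem : ∀ i j, (i, j) ∈ E ↔ (F.coeff i).coeff j ≠ 0 := by
    intro i j
    simp only [hE, Finset.mem_filter, Finset.mem_product, Finset.mem_range, and_iff_right_iff_imp]
    intro h
    have h1 := hle_nat i j h
    have h2 := hF2 i
    omega
  have hE1 : ∀ e ∈ E, e.1 ≤ d := by
    intro e he
    simp only [hE, Finset.mem_filter, Finset.mem_product, Finset.mem_range] at he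
    omega
  have hE2 : ∀ e ∈ E, e.2 ≤ d := by
    intro e he
    simp only [hE, Finset.mem_filter, Finset.mem_product, Finset.mem_range] at he
    omega
  have hEcard : Fintype.card E ≤ g := by
    rw [Fintype.card_coe]
    refine (Finset.card_filter_le _ _).trans ?_
    simp [hg]
  have hFmk : F = mkP E (fun e => (F.coeff e.1.1).coeff e.1.2) := by
    ext i j
    rw [mkP_coeff]
    split_ifs with h
    · rfl
    · rw [hEmem] at h
      exact_mod_cast not_not.mp h
  have : Nonempty T := hTne.to_subtype
  have hB1 : 1 ≤ (H ^ α) ^ (2 * d) := one_le_pow₀ hHα1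
  obtain ⟨x, hx0, hxz, hxb⟩ := siegel (T := T) (E := E)
    (fun q e => q.1.1 ^ e.1.1 * q.1.2 ^ e.1.2) ((H ^ α) ^ (2 * d)) hB1
    (by
      intro q e
      push_cast
      rw [abs_mul, abs_pow, abs_pow, two_mul, pow_add]
      have e1 : |(q.1.1 : ℝ)| ^ e.1.1 ≤ (H ^ α) ^ d :=
        (pow_le_pow_left₀ (abs_nonneg _) (hTb q.1 q.2).1 _).trans
          (pow_le_pow_right₀ hHα1 (hE1 _ e.2))
      have e2 : |(q.1.2 : ℝ)| ^ e.1.2 ≤ (H ^ α) ^ d :=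
        (pow_le_pow_left₀ (abs_nonneg _) ((hTb q.1 q.2).2.trans hHα) _).trans
          (pow_le_pow_right₀ hHα1 (hE2 _ e.2))
      gcongr)
    (fun e => ((F.coeff e.1.1).coeff e.1.2 : ℚ))
    (by
      intro h0
      have := congrFun h0 ⟨(m, 0), (hEmem m 0).2 hFm⟩
      simp only [Pi.zero_apply] at this
      exact hFm (by exact_mod_cast this))
    (by
      intro q
      have := hT0 q.1 q.2
      rw [hFmk, mkP_evalEval] at this
      exact_mod_cast this)
  set G := mkP E x with hG
  have hG0 : toQ G ≠ 0 := by
    have := mkP_ne_zero E x hx0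
    rw [toQ]
    intro h0
    rw [Polynomial.map_eq_zero_iff (map_injective _ (Int.cast_injective))] at h0
    exact this h0
  have hG1 : G.natDegree ≤ d := mkP_natDegree E x d hE1
  have hG2 : ∀ i, (G.coeff i).natDegree ≤ d := mkP_coeff_natDegree E x d hE2
  have hGT : ∀ q ∈ T, G.evalEval q.2 q.1 = 0 := by
    intro q hq
    rw [hG, mkP_evalEval]
    exact hxz ⟨q, hq⟩
  by_cases hdvd : toQ F ∣ toQ G
  · obtain ⟨c, hc0, hc⟩ := eq_const_mul_of_dvd hG0 hdvd (by
      intro i j h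
      rw [toQ_coeff] at h ⊢
      rw [hG, mkP_coeff, dif_neg]
      · simp
      · rw [hEmem]
        simpa using h)
    have hirr : Irreducible (toQ G) := by
      have hu : IsUnit (C (C c) : ℚ[X][Y]) :=
        ((isUnit_iff_ne_zero.2 hc0).map C).map C
      rw [hc]
      exact (irreducible_mul_isUnit hu).2 hF
    have hGm : (G.coeff m).coeff 0 ≠ 0 := by
      intro h0
      have h1 : ((toQ G).coeff m).coeff 0 = 0 := by rw [toQ_coeff, h0]; simp
      rw [hc, coeff_mul_C, coeff_mul_C, toQ_coeff] at h1
      rcases mul_eq_zero.1 h1 with h2 | h2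
      · exact hFm (by exact_mod_cast h2)
      · exact hc0 h2
    have hg1 : 1 ≤ g := by rw [hg]; nlinarith
    have hbound : ∀ e, |(x e : ℝ)| ≤ H ^ (((g : ℕ) + α * (2 * d : ℕ)) * (g : ℕ) : ℝ) := by
      intro e
      refine (hxb e).trans ?_
      have hg1' : (1 : ℝ) ≤ g := by exact_mod_cast hg1
      have hE' : (Fintype.card E : ℝ) ≤ g := by exact_mod_cast hEcard
      have h1 : ((Fintype.card E : ℝ) * (H ^ α) ^ (2 * d)) ^ (Fintype.card E) ≤
          ((g : ℝ) * (H ^ α) ^ (2 * d)) ^ (Fintype.card E) := by gcongr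
      have h2 : ((g : ℝ) * (H ^ α) ^ (2 * d)) ^ (Fintype.card E) ≤
          ((g : ℝ) * (H ^ α) ^ (2 * d)) ^ g :=
        pow_le_pow_right₀ (one_le_mul_of_one_le_of_one_le hg1' hB1) hEcard
      refine (h1.trans h2).trans ?_
      rw [Real.rpow_mul hH0.le, Real.rpow_add hH0, Real.rpow_mul hH0.le α, Real.rpow_natCast _ g,
        Real.rpow_natCast (H ^ α), Real.rpow_natCast]
      have h3 := natCast_le_rpow g H hH
      rw [Real.rpow_natCast] at h3
      gcongr
    have := hmain m hm G hG1 hG2 hirr hGm H hH (by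
      intro i j
      rw [hG, mkP_coeff]
      split_ifs with h
      · exact hbound _
      · simp only [Int.cast_zero, abs_zero]; positivity) T hGT hTb
    refine this.trans ?_
    gcongr
    exact le_add_of_nonneg_right (by positivity)
  · have hb := bezout d (toQ F) (toQ G) hF (by rwa [toQ_natDegree]) hdvd (by rwa [toQ_natDegree])
      (fun i => by rw [toQ_coeff_natDegree]; exact hF2 i) (by rwa [toQ_natDegree])
      (fun i => by rw [toQ_coeff_natDegree]; exact hG2 i) T
      (fun q hq => by
        rw [toQ_evalEval, toQ_evalEval, hT0 q hq, hGT q hq]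
        simp)
    have hb' : (T.card : ℝ) ≤ ((d * (2 * d * d) : ℕ) : ℝ) := by exact_mod_cast hb
    have h1 : ((d * (2 * d * d) : ℕ) : ℝ) ≤ C1 + ((d * (2 * d * d) : ℕ) : ℝ) := by linarith
    exact hb'.trans (h1.trans (le_mul_of_one_le_right (by positivity) hX1))

/-- Polynomials in two variables as bivariate polynomials; the variable `0` is the outer one. -/
noncomputable def toBiv (R : Type*) [CommRing R] : MvPolynomial (Fin 2) R ≃ₐ[R] R[X][Y] :=
  (MvPolynomial.finSuccEquiv R 1).trans
    (Polynomial.mapAlgEquiv (MvPolynomial.uniqueAlgEquiv R (Fin 1)))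

lemma toBiv_coeff {R : Type*} [CommRing R] (P : MvPolynomial (Fin 2) R) (i j : ℕ) :
    ((toBiv R P).coeff i).coeff j = P.coeff ((Finsupp.single (0 : Fin 1) j).cons i) := by
  have h : (toBiv R P).coeff i =
      MvPolynomial.uniqueAlgEquiv R (Fin 1) ((MvPolynomial.finSuccEquiv R 1 P).coeff i) := by
    simp [toBiv]
  rw [h, MvPolynomial.coeff_uniqueAlgEquiv, MvPolynomial.finSuccEquiv_coeff_coeff]
  rfl

lemma toBiv_map (P : MvPolynomial (Fin 2) ℤ) :
    toQ (toBiv ℤ P) = toBiv ℚ (MvPolynomial.map (Int.castRingHom ℚ) P) := by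
  ext i j
  rw [toQ_coeff, toBiv_coeff, toBiv_coeff, MvPolynomial.coeff_map]
  simp

lemma toBiv_eval {R : Type*} [CommRing R] (P : MvPolynomial (Fin 2) R) (z t : R) :
    (toBiv R P).evalEval t z = MvPolynomial.eval (fun i => if i = 0 then z else t) P := by
  induction P using MvPolynomial.induction_on with
  | C a =>
    have h : toBiv R (MvPolynomial.C a) = C (C a) := (toBiv R).commutes a
    rw [h]
    simp [evalEval]
  | add p q hp hq => rw [map_add, map_add, evalEval_add, hp, hq]
  | mul_X p i hp =>
    rw [map_mul, map_mul, evalEval_mul, hp]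
    congr 1
    fin_cases i
    · simp [toBiv, evalEval, MvPolynomial.finSuccEquiv_X_zero]
    · have := MvPolynomial.finSuccEquiv_X_succ (R := R) (n := 1) (j := 0)
      simp only [Fin.succ_zero_eq_one] at this
      simp [toBiv, evalEval, this]

lemma toBiv_bound {R : Type*} [CommRing R] (P : MvPolynomial (Fin 2) R) (i j : ℕ)
    (h : ((toBiv R P).coeff i).coeff j ≠ 0) : i + j ≤ P.totalDegree := by
  rw [toBiv_coeff] at h
  have := MvPolynomial.le_totalDegree (MvPolynomial.mem_support_iff.2 h)
  rw [Finsupp.sum_fintype _ _ (by simp), Fin.sum_univ_two] at this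
  have e : (Finsupp.cons i (Finsupp.single (0 : Fin 1) j) : Fin 2 →₀ ℕ) 1 = j := by
    have := Finsupp.cons_succ (0 : Fin 1) i (Finsupp.single (0 : Fin 1) j)
    simpa using this
  rw [e, Finsupp.cons_zero] at this
  exact this

end BP

/-- Let `Φ ∈ ℤ[z, t]` be irreducible over `ℚ` such that the monomial `z^m` (with `m ≥ 1`)
occurs in `Φ` with nonzero coefficient, and let `α ≥ 1`, `ε > 0`. Then for `H ≥ 2` the number
of integer pairs `(z, t)` with `|z| ≤ H^α`, `|t| ≤ H` and `Φ(z, t) = 0` is at most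
`C·H^(1/m+ε)`, with `C` depending only on the total degree of `Φ`, on `α` and on `ε`.
Here the variable `0` of `Fin 2` plays the role of `z` and the variable `1` that of `t`. -/
theorem count_integral_points_on_resolvent_curve (d : ℕ) (α ε : ℝ) (hα : 1 ≤ α)
    (hε : 0 < ε) :
    ∃ C : ℝ, ∀ m : ℕ, 1 ≤ m → ∀ Φ : MvPolynomial (Fin 2) ℤ,
      Φ.totalDegree = d →
      Irreducible (MvPolynomial.map (Int.castRingHom ℚ) Φ) →
      MvPolynomial.coeff (Finsupp.single (0 : Fin 2) m) Φ ≠ 0 →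
      ∀ H : ℝ, 2 ≤ H →
        (Set.ncard {p : ℤ × ℤ |
            (|p.1| : ℝ) ≤ H ^ α ∧ (|p.2| : ℝ) ≤ H ∧
            MvPolynomial.eval (fun i => if i = 0 then p.1 else p.2) Φ = 0} : ℝ)
          ≤ C * H ^ (1 / (m : ℝ) + ε) := by
  obtain ⟨C, hC, hmain⟩ := BP.main_fin d α ε hα hε
  refine ⟨C, ?_⟩
  intro m hm Φ hd hirr hcoef H hH
  have hcm : ((BP.toBiv ℤ Φ).coeff m).coeff 0 ≠ 0 := by
    rw [BP.toBiv_coeff]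
    have he : (Finsupp.cons m (Finsupp.single (0 : Fin 1) 0) : Fin 2 →₀ ℕ) =
        Finsupp.single 0 m := by
      ext i
      fin_cases i
      · simp
      · have := Finsupp.cons_succ (0 : Fin 1) m (Finsupp.single (0 : Fin 1) 0)
        simpa using this
    rw [he]
    exact hcoef
  have h1 : (BP.toBiv ℤ Φ).natDegree ≤ d := by
    apply BP.natDegree_le_of_coeff
    intro i j hij
    by_contra h
    have := BP.toBiv_bound Φ i j h
    omega
  have h2 : ∀ i, ((BP.toBiv ℤ Φ).coeff i).natDegree ≤ d := by
    intro i
    rw [Polynomial.natDegree_le_iff_coeff_eq_zero]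
    intro j hj
    by_contra h
    have := BP.toBiv_bound Φ i j h
    omega
  have h3 : Irreducible (BP.toQ (BP.toBiv ℤ Φ)) := by
    rw [BP.toBiv_map]
    exact (MulEquiv.irreducible_iff (BP.toBiv ℚ)).2 hirr
  have h4 := hmain m hm (BP.toBiv ℤ Φ) h1 h2 h3 hcm H hH
  set S := {p : ℤ × ℤ | (|p.1| : ℝ) ≤ H ^ α ∧ (|p.2| : ℝ) ≤ H ∧
            MvPolynomial.eval (fun i => if i = 0 then p.1 else p.2) Φ = 0} with hS
  by_cases hfin : S.Finite
  · rw [Set.ncard_eq_toFinset_card S hfin]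
    apply h4
    · intro q hq
      rw [Set.Finite.mem_toFinset] at hq
      rw [BP.toBiv_eval]
      exact hq.2.2
    · intro q hq
      rw [Set.Finite.mem_toFinset] at hq
      exact ⟨hq.1, hq.2.1⟩
  · rw [Set.Infinite.ncard hfin]
    have : (0 : ℝ) ≤ H := by linarith
    push_cast
    positivity
end
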